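/- arXiv:2502.07861 — 2 statements merged into one kernel-verified Lean document; each statement's English description precedes it below -/
import Mathlib

section
/- There exists an absolute constant c > 0 such that the following holds. Let n, d, s be positive integers with s ≤ d, let r > 0 and ε > 0, let k_1, …, k_n ∈ ℝ^d satisfy ‖k_i‖₂ ≤ r for all i, and let v_1, …, v_n ∈ ℝ^s. Set t = ⌈c·√s·(log(sn))²·exp(2r²/√d)/ε⌉, assume t ≤ n and that n/t is a power of 2, and set T = log₂(n/t). Then there exists a (finitely supported) probability distribution over tuples (C^0, C^1, …, C^T) of pairwise disjoint subsets of {1,…,n} with |C^l| ≤ t for each 0 ≤ l ≤ T, such that for every q ∈ ℝ^d with ‖q‖₂ ≤ r, with probability at least 1 − 1/n² over the choice of the tuple, ‖ ∑_{i=1}^n exp(⟨k_i, q⟩/√d) v_i − ∑_{l=0}^T 2^l ∑_{i ∈ C^l} exp(⟨k_i, q⟩/√d) v_i ‖₂ ≤ ε · n · exp(−r²/√d) · max_{i ∈ [n]} ‖v_i‖₂. -/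
open RealInnerProductSpace
open scoped ENNReal TensorProduct

/-!
The softmax kernel is the inner product `⟪φ k, φ q⟫` of a feature map `φ` into a Hilbert space (a
direct sum of tensor powers), so each coordinate of the estimation error at the query `q` is an
inner product of `φ q ⊗ e_j` with the error of estimating `∑ φ k_i ⊗ v_i` itself. To halve a set,
choose one element of each pair by a random sign biased against `⟪w, x⟫`, where `w` is the error so
far and `x` the difference of the pair: the bias keeps `w` subgaussian in every direction with a
variance proxy `c` that depends neither on the dimension nor on the number of steps, unless
`|⟪w, x⟫|` exceeds `c` at some step. The errors of the `T` halvings enter with the weights `1`,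
`2`, `4`, …, so their sum stays proportional to the final weight `2 ^ T`. A proxy `c` of order
`log (s n)` beats the union bound over the steps and the `s` coordinates. The resulting estimator
uses only the top level.
-/

section FeatureMap

universe u

variable {E : Type u} [NormedAddCommGroup E] [InnerProductSpace ℝ E]

lemma exists_inner_eq_pow_div_factorial (n : ℕ) :
    ∃ (H : Type u) (_ : NormedAddCommGroup H) (_ : InnerProductSpace ℝ H) (φ : E → H),
      ∀ x y, ⟪φ x, φ y⟫ = ⟪x, y⟫ ^ n / n.factorial := by
  induction n with
  | zero =>
    exact ⟨EuclideanSpace ℝ PUnit, inferInstance, inferInstance,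
      fun _ => EuclideanSpace.single PUnit.unit 1, fun x y => by simp⟩
  | succ n ih =>
    obtain ⟨H, _, _, φ, hφ⟩ := ih
    refine ⟨E ⊗[ℝ] H, inferInstance, inferInstance, fun x => ((√(n + 1))⁻¹ • x) ⊗ₜ φ x,
      fun x y => ?_⟩
    have hsq : (√(n + 1 : ℝ))⁻¹ * (√(n + 1 : ℝ))⁻¹ = (n + 1 : ℝ)⁻¹ := by
      rw [← mul_inv, Real.mul_self_sqrt (by positivity)]
    rw [TensorProduct.inner_tmul, real_inner_smul_left, real_inner_smul_right, hφ, ← mul_assoc,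
      hsq, Nat.factorial_succ, pow_succ']
    push_cast
    field_simp

lemma exists_inner_eq_exp_inner_div {σ : ℝ} (hσ : 0 ≤ σ) :
    ∃ (H : Type u) (_ : NormedAddCommGroup H) (_ : InnerProductSpace ℝ H) (φ : E → H),
      ∀ x y, ⟪φ x, φ y⟫ = Real.exp (⟪x, y⟫ / σ) := by
  choose H _ _ φ hφ using exists_inner_eq_pow_div_factorial (E := E)
  have hmem (x : E) : Memℓp (fun n => φ n x) 2 := by
    refine memℓp_gen ((Real.summable_pow_div_factorial ⟪x, x⟫).congr fun n => ?_)
    rw [← hφ, real_inner_self_eq_norm_sq, ENNReal.toReal_ofNat, Real.rpow_two]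
  refine ⟨lp H 2, inferInstance, inferInstance,
    fun x => ⟨fun n => φ n ((√σ)⁻¹ • x), hmem _⟩, fun x y => ?_⟩
  have hscale : ⟪(√σ)⁻¹ • x, (√σ)⁻¹ • y⟫ = ⟪x, y⟫ / σ := by
    rw [real_inner_smul_left, real_inner_smul_right, ← mul_assoc, ← mul_inv,
      Real.mul_self_sqrt hσ, inv_mul_eq_div]
  rw [lp.inner_eq_tsum, Real.exp_eq_exp_ℝ, NormedSpace.exp_eq_tsum_div]
  simp only [hφ, hscale]

end FeatureMap

section FailingRandomVariables

variable {α β : Type*}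

lemma tsum_option_ennreal (f : Option α → ℝ≥0∞) :
    ∑' o, f o = f none + ∑' a, f (some a) := by
  rw [add_comm]
  exact (((Option.some_injective α).hasSum_range_iff.2 ENNReal.summable.hasSum).add_isCompl
    (Set.isCompl_range_some_none α) (hasSum_singleton none f)).tsum_eq

/-- A distribution on `Option α` models a random element of `α` produced by a procedure that may
fail, with outcome `none`. This is the expectation of `g` restricted to the event that the
procedure succeeds. -/
noncomputable def partialExpect (μ : PMF (Option α)) (g : α → ℝ≥0∞) : ℝ≥0∞ :=
  ∑' a, μ (some a) * g a

lemma partialExpect_mono {μ : PMF (Option α)} {f g : α → ℝ≥0∞}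
    (h : ∀ a, some a ∈ μ.support → f a ≤ g a) : partialExpect μ f ≤ partialExpect μ g := by
  refine ENNReal.tsum_le_tsum fun a => ?_
  by_cases ha : some a ∈ μ.support
  · gcongr
    exact h a ha
  · simp [(PMF.apply_eq_zero_iff μ _).2 ha]

lemma partialExpect_add (μ : PMF (Option α)) (f g : α → ℝ≥0∞) :
    (partialExpect μ fun a => f a + g a) = partialExpect μ f + partialExpect μ g := by
  simp only [partialExpect, mul_add, ENNReal.tsum_add]

lemma partialExpect_const_mul (μ : PMF (Option α)) (c : ℝ≥0∞) (f : α → ℝ≥0∞) :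
    (partialExpect μ fun a => c * f a) = c * partialExpect μ f := by
  simp only [partialExpect, mul_left_comm _ c, ENNReal.tsum_mul_left]

lemma partialExpect_pure_none (g : α → ℝ≥0∞) : partialExpect (PMF.pure none) g = 0 := by
  simp [partialExpect]

lemma partialExpect_pure_some (a : α) (g : α → ℝ≥0∞) :
    partialExpect (PMF.pure (some a)) g = g a := by
  rw [partialExpect, tsum_eq_single a fun b hb => by simp [PMF.pure_apply, hb]]
  simp

/-- Sequential composition of two procedures that may fail. -/
noncomputable def failBind (μ : PMF (Option α)) (f : α → PMF (Option β)) : PMF (Option β) :=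
  μ.bind fun o => o.elim (PMF.pure none) f

lemma failBind_apply_none (μ : PMF (Option α)) (f : α → PMF (Option β)) :
    failBind μ f none = μ none + partialExpect μ fun a => f a none := by
  simp [failBind, PMF.bind_apply, tsum_option_ennreal, partialExpect]

lemma partialExpect_failBind (μ : PMF (Option α)) (f : α → PMF (Option β)) (g : β → ℝ≥0∞) :
    partialExpect (failBind μ f) g = partialExpect μ fun a => partialExpect (f a) g := by
  simp only [partialExpect, failBind, PMF.bind_apply, tsum_option_ennreal, Option.elim_none,
    Option.elim_some, PMF.pure_apply, reduceCtorEq, if_false, mul_zero, zero_add,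
    ← ENNReal.tsum_mul_right, ← ENNReal.tsum_mul_left]
  rw [ENNReal.tsum_comm]
  simp only [mul_assoc]

lemma exists_mem_support_of_mem_support_failBind {μ : PMF (Option α)} {f : α → PMF (Option β)}
    {b : β} (hb : some b ∈ (failBind μ f).support) :
    ∃ a, some a ∈ μ.support ∧ some b ∈ (f a).support := by
  obtain ⟨_ | a, ha, hb⟩ := (PMF.mem_support_bind_iff _ _ _).1 hb
  · simp at hb
  · exact ⟨a, ha, hb⟩

lemma toOuterMeasure_map_getD_le (μ : PMF (Option α)) (a₀ : α) (S : Set α) :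
    (μ.map fun o => o.getD a₀).toOuterMeasure S ≤
      μ none + partialExpect μ (S.indicator 1) := by
  classical
  rw [PMF.toOuterMeasure_map_apply, PMF.toOuterMeasure_apply, tsum_option_ennreal]
  refine add_le_add (Set.indicator_le_self _ _ _) (ENNReal.tsum_le_tsum fun a => ?_)
  by_cases ha : a ∈ S <;> simp [ha]

end FailingRandomVariables

section Distributions

variable {α β : Type*}

lemma toOuterMeasure_bind_le_add {μ : PMF α} {f : α → PMF β} {s : Set α} {t : Set β}
    {δ δ' : ℝ≥0∞} (hs : μ.toOuterMeasure s ≤ δ)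
    (ht : ∀ a ∈ μ.support, a ∉ s → (f a).toOuterMeasure t ≤ δ') :
    (μ.bind f).toOuterMeasure t ≤ δ + δ' := by
  classical
  rw [PMF.toOuterMeasure_bind_apply]
  calc ∑' a, μ a * (f a).toOuterMeasure t
      ≤ ∑' a, (s.indicator μ a + μ a * δ') := ENNReal.tsum_le_tsum fun a => ?_
    _ = μ.toOuterMeasure s + δ' := by
      rw [ENNReal.tsum_add, ENNReal.tsum_mul_right, PMF.tsum_coe, one_mul,
        PMF.toOuterMeasure_apply]
    _ ≤ δ + δ' := by gcongr
  by_cases has : a ∈ s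
  · rw [Set.indicator_of_mem has]
    refine le_add_right (mul_le_of_le_one_right' ?_)
    exact ((f a).toOuterMeasure.mono (Set.subset_univ t)).trans_eq
      (((f a).toOuterMeasure_apply_eq_one_iff _).2 (Set.subset_univ _))
  · rw [Set.indicator_of_notMem has, zero_add]
    by_cases ha : a ∈ μ.support
    · gcongr
      exact ht a ha has
    · simp [(PMF.apply_eq_zero_iff μ a).2 ha]

lemma ofReal_one_sub_le_toOuterMeasure {μ : PMF α} {s : Set α} {δ : ℝ} (hδ : 0 ≤ δ)
    (h : μ.toOuterMeasure sᶜ ≤ ENNReal.ofReal δ) :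
    ENNReal.ofReal (1 - δ) ≤ μ.toOuterMeasure s := by
  rw [ENNReal.ofReal_sub _ hδ, ENNReal.ofReal_one, tsub_le_iff_right]
  calc 1 = μ.toOuterMeasure (s ∪ sᶜ) := by
        rw [Set.union_compl_self]
        exact ((μ.toOuterMeasure_apply_eq_one_iff _).2 (Set.subset_univ _)).symm
    _ ≤ μ.toOuterMeasure s + μ.toOuterMeasure sᶜ := MeasureTheory.measure_union_le _ _
    _ ≤ _ := by gcongr

end Distributions

section SelfBalancingWalk

open ProbabilityTheory in
/-- Hoeffding's lemma for a random sign of mean `b`. -/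
lemma biased_sign_mgf_le {b : ℝ} (hb : |b| ≤ 1) (a : ℝ) :
    (1 + b) / 2 * Real.exp a + (1 - b) / 2 * Real.exp (-a) ≤ Real.exp (b * a + a ^ 2 / 2) := by
  obtain ⟨hb1, hb2⟩ := abs_le.1 hb
  let μ := bernoulliMeasure (1 : ℝ) (-1) ⟨(1 + b) / 2, by linarith, by linarith⟩
  have hμ (f : ℝ → ℝ) : ∫ x, f x ∂μ = (1 + b) / 2 * f 1 + (1 - b) / 2 * f (-1) := by
    rw [integral_bernoulliMeasure, smul_eq_mul, smul_eq_mul]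
    ring
  have hIcc : ∀ᵐ x ∂μ, id x ∈ Set.Icc (-1 : ℝ) 1 :=
    MeasureTheory.ae_iff.2 (bernoulliMeasure_apply_of_notMem_of_notMem _
      measurableSet_Icc.compl (by norm_num) (by norm_num))
  have h := (hasSubgaussianMGF_of_mem_Icc aemeasurable_id hIcc).mgf_le a
  have hmean : ∫ x, id x ∂μ = b := by
    rw [hμ, id, id]
    ring
  have hvar : (((‖(1 : ℝ) - -1‖₊ / 2) ^ 2 : NNReal) : ℝ) = 1 := by norm_num
  rw [mgf, hmean, hμ, hvar, one_mul, id, id] at h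
  calc _ = ((1 + b) / 2 * Real.exp (a * (1 - b)) + (1 - b) / 2 * Real.exp (a * (-1 - b)))
        * Real.exp (b * a) := by
        rw [add_mul, mul_assoc, mul_assoc, ← Real.exp_add, ← Real.exp_add]
        ring_nf
    _ ≤ Real.exp (a ^ 2 / 2) * Real.exp (b * a) := by gcongr
    _ = _ := by rw [← Real.exp_add, add_comm]

/-- A coin of bias `b`: it shows `true` with probability `(1 + b) / 2` and `false` with probability
`(1 - b) / 2`, and fails if these are not probabilities. -/
noncomputable def biasedCoin (b : ℝ) : PMF (Option Bool) :=
  if h : |b| ≤ 1 then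
    PMF.ofFintype (fun o => o.elim 0 fun x => ENNReal.ofReal ((cond x (1 + b) (1 - b)) / 2)) <| by
      obtain ⟨h1, h2⟩ := abs_le.1 h
      simp only [Fintype.sum_option, Fintype.sum_bool, Option.elim_none, Option.elim_some, zero_add,
        cond_true, cond_false]
      rw [← ENNReal.ofReal_add (by linarith) (by linarith), ENNReal.ofReal_eq_one]
      ring
  else PMF.pure none

lemma biasedCoin_of_one_lt {b : ℝ} (hb : 1 < |b|) : biasedCoin b = PMF.pure none :=
  dif_neg hb.not_ge

lemma biasedCoin_apply_none {b : ℝ} (hb : |b| ≤ 1) : biasedCoin b none = 0 := by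
  simp [biasedCoin, hb]

lemma partialExpect_biasedCoin {b : ℝ} (hb : |b| ≤ 1) (g : Bool → ℝ≥0∞) :
    partialExpect (biasedCoin b) g =
      ENNReal.ofReal ((1 + b) / 2) * g true + ENNReal.ofReal ((1 - b) / 2) * g false := by
  simp [partialExpect, biasedCoin, hb]

lemma partialExpect_biasedCoin_exp_le (b y a : ℝ) :
    (partialExpect (biasedCoin b) fun s => ENNReal.ofReal (Real.exp (cond s (y - a) (y + a)))) ≤
      ENNReal.ofReal (Real.exp (y - b * a + a ^ 2 / 2)) := by
  rcases lt_or_ge 1 |b| with hb | hb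
  · simp [biasedCoin_of_one_lt hb, partialExpect_pure_none]
  obtain ⟨hb1, hb2⟩ := abs_le.1 hb
  have h_true : 0 ≤ (1 + b) / 2 := by linarith
  have h_false : 0 ≤ (1 - b) / 2 := by linarith
  rw [partialExpect_biasedCoin hb, ← ENNReal.ofReal_mul h_true, ← ENNReal.ofReal_mul h_false,
    ← ENNReal.ofReal_add (by positivity) (by positivity)]
  refine ENNReal.ofReal_le_ofReal ?_
  calc (1 + b) / 2 * Real.exp (y - a) + (1 - b) / 2 * Real.exp (y + a)
      = Real.exp y * ((1 + b) / 2 * Real.exp (-a) + (1 - b) / 2 * Real.exp (- -a)) := by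
        rw [sub_eq_add_neg, Real.exp_add, Real.exp_add, neg_neg]
        ring
    _ ≤ Real.exp y * Real.exp (b * -a + (-a) ^ 2 / 2) := by
        gcongr
        exact biased_sign_mgf_le hb _
    _ = Real.exp (y - b * a + a ^ 2 / 2) := by
        rw [← Real.exp_add]
        ring_nf

variable {α β E : Type*} [NormedAddCommGroup E] [InnerProductSpace ℝ E]

/-- The random vector `w`, produced by a procedure that may fail, is subgaussian with variance proxy
`c` in every direction on the event that the procedure succeeds. -/
def IsSubgaussianOnSome (c : ℝ) (μ : PMF (Option α)) (w : α → E) : Prop :=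
  ∀ θ : E, (partialExpect μ fun a => ENNReal.ofReal (Real.exp ⟪w a, θ⟫)) ≤
    ENNReal.ofReal (Real.exp (c / 2 * ‖θ‖ ^ 2))

/-- The Chernoff bound for `ℙ(c < |X|)`, where `X` is subgaussian with variance proxy `c`. -/
noncomputable def tailBound (c : ℝ) : ℝ≥0∞ := ENNReal.ofReal (2 * Real.exp (-c / 2))

lemma one_le_exp_neg_mul_exp_add_exp_neg {c y : ℝ} (h : c ≤ |y|) :
    1 ≤ Real.exp (-c) * (Real.exp y + Real.exp (-y)) := by
  calc 1 = Real.exp (-c) * Real.exp c := by rw [← Real.exp_add, neg_add_cancel, Real.exp_zero]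
    _ ≤ Real.exp (-c) * Real.exp |y| := by gcongr
    _ ≤ Real.exp (-c) * (Real.exp y + Real.exp (-y)) := by
      gcongr
      exact Real.exp_abs_le y

lemma IsSubgaussianOnSome.tail_le_of_norm_le_one {c : ℝ} (hc : 0 ≤ c) {μ : PMF (Option α)}
    {w : α → E} (h : IsSubgaussianOnSome c μ w) {θ : E} (hθ : ‖θ‖ ≤ 1) :
    partialExpect μ ({a | c < |⟪w a, θ⟫|}.indicator 1) ≤ tailBound c := by
  have hexp : ENNReal.ofReal (Real.exp (c / 2 * ‖θ‖ ^ 2)) ≤ ENNReal.ofReal (Real.exp (c / 2)) :=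
    ENNReal.ofReal_le_ofReal <| Real.exp_le_exp.2 <|
      mul_le_of_le_one_right (by positivity) (pow_le_one₀ (norm_nonneg _) hθ)
  have hneg := h (-θ)
  rw [norm_neg] at hneg
  calc partialExpect μ ({a | c < |⟪w a, θ⟫|}.indicator 1)
      ≤ partialExpect μ fun a => ENNReal.ofReal (Real.exp (-c)) *
          (ENNReal.ofReal (Real.exp ⟪w a, θ⟫) + ENNReal.ofReal (Real.exp ⟪w a, -θ⟫)) := by
        refine partialExpect_mono fun a _ => Set.indicator_apply_le' (fun ha => ?_) fun _ => zero_le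
        rw [← ENNReal.ofReal_add (by positivity) (by positivity),
          ← ENNReal.ofReal_mul (by positivity), inner_neg_right, Pi.one_apply,
          ENNReal.one_le_ofReal]
        exact one_le_exp_neg_mul_exp_add_exp_neg (le_of_lt ha)
    _ ≤ ENNReal.ofReal (Real.exp (-c)) * (ENNReal.ofReal (Real.exp (c / 2)) +
          ENNReal.ofReal (Real.exp (c / 2))) := by
        rw [partialExpect_const_mul, partialExpect_add]
        gcongr
        · exact (h θ).trans hexp
        · exact hneg.trans hexp
    _ = tailBound c := by
        rw [tailBound, ← ENNReal.ofReal_add (by positivity) (by positivity),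
          ← ENNReal.ofReal_mul (by positivity), ← two_mul, mul_left_comm, ← Real.exp_add]
        ring_nf

lemma norm_inv_smul_le_one {x : E} {D : ℝ} (hx : ‖x‖ ≤ D) : ‖D⁻¹ • x‖ ≤ 1 := by
  have hD : 0 ≤ D := (norm_nonneg x).trans hx
  rw [norm_smul, norm_inv, Real.norm_of_nonneg hD]
  exact inv_mul_le_one_of_le₀ hx hD

lemma smul_inv_smul_of_norm_le {x : E} {D : ℝ} (hx : ‖x‖ ≤ D) : D • D⁻¹ • x = x := by
  rcases eq_or_ne D 0 with rfl | hD
  · simp [norm_le_zero_iff.1 hx]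
  · exact smul_inv_smul₀ hD x

lemma IsSubgaussianOnSome.tail_le {c : ℝ} (hc : 0 ≤ c) {μ : PMF (Option α)}
    {w : α → E} (h : IsSubgaussianOnSome c μ w) (θ : E) :
    partialExpect μ ({a | c * ‖θ‖ < |⟪w a, θ⟫|}.indicator 1) ≤ tailBound c := by
  refine (partialExpect_mono fun a _ => ?_).trans
    (h.tail_le_of_norm_le_one hc (norm_inv_smul_le_one le_rfl : ‖‖θ‖⁻¹ • θ‖ ≤ 1))
  refine Set.indicator_le_indicator_of_subset (fun b hb => ?_) (fun _ => zero_le) a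
  rw [Set.mem_ofPred_eq, ← smul_inv_smul_of_norm_le (le_refl ‖θ‖), real_inner_smul_right, abs_mul,
    abs_norm, smul_inv_smul_of_norm_le le_rfl, mul_comm] at hb
  exact lt_of_mul_lt_mul_left hb (norm_nonneg θ)

/-- A step along `x` with bias against `w` contracts the test direction `θ` along `x`, which pays
for the variance of the step. -/
lemma exp_mul_exp_norm_sub_le {c : ℝ} (hc : 1 ≤ c) {x : E} (hx : ‖x‖ ≤ 1) (θ : E) :
    Real.exp (⟪x, θ⟫ ^ 2 / 2) * Real.exp (c / 2 * ‖θ - (⟪x, θ⟫ / c) • x‖ ^ 2) ≤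
      Real.exp (c / 2 * ‖θ‖ ^ 2) := by
  have hc0 : 0 < c := by linarith
  have hxc : ‖x‖ ^ 2 / c ≤ 1 := (div_le_one hc0).2 ((pow_le_one₀ (norm_nonneg _) hx).trans hc)
  rw [← Real.exp_add, Real.exp_le_exp, norm_sub_sq_real, real_inner_smul_right, norm_smul,
    real_inner_comm x θ, Real.norm_eq_abs, mul_pow, sq_abs]
  calc _ = c / 2 * ‖θ‖ ^ 2 - ⟪x, θ⟫ ^ 2 / 2 * (1 - ‖x‖ ^ 2 / c) := by
        field_simp
        ring
    _ ≤ c / 2 * ‖θ‖ ^ 2 := sub_le_self _ (mul_nonneg (by positivity) (sub_nonneg.2 hxc))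

lemma partialExpect_biasedCoin_exp_inner_le (c : ℝ) (w x θ : E) :
    (partialExpect (biasedCoin (⟪w, x⟫ / c)) fun s =>
        ENNReal.ofReal (Real.exp ⟪cond s (w - x) (w + x), θ⟫)) ≤
      ENNReal.ofReal (Real.exp (⟪x, θ⟫ ^ 2 / 2)) *
        ENNReal.ofReal (Real.exp ⟪w, θ - (⟪x, θ⟫ / c) • x⟫) := by
  have hcond (s : Bool) :
      ⟪cond s (w - x) (w + x), θ⟫ = cond s (⟪w, θ⟫ - ⟪x, θ⟫) (⟪w, θ⟫ + ⟪x, θ⟫) := by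
    cases s
    · exact inner_add_left _ _ _
    · exact inner_sub_left _ _ _
  simp only [hcond]
  refine (partialExpect_biasedCoin_exp_le _ _ _).trans_eq ?_
  rw [← ENNReal.ofReal_mul (by positivity), ← Real.exp_add, inner_sub_right, real_inner_smul_right]
  ring_nf

/-- One step of the self-balancing walk, moving from `w` to `w - x` or `w + x` with a bias against
the sign of `⟪w, x⟫`. -/
noncomputable def walkStep (c : ℝ) (x : E) (μ : PMF (Option α)) (w : α → E) (f : α → Bool → β) :
    PMF (Option β) :=
  failBind μ fun a => failBind (biasedCoin (⟪w a, x⟫ / c)) fun s => PMF.pure (some (f a s))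

lemma exists_of_mem_support_walkStep {c : ℝ} {x : E} {μ : PMF (Option α)} {w : α → E}
    {f : α → Bool → β} {b : β} (hb : some b ∈ (walkStep c x μ w f).support) :
    ∃ a s, some a ∈ μ.support ∧ f a s = b := by
  obtain ⟨a, ha, hb⟩ := exists_mem_support_of_mem_support_failBind hb
  obtain ⟨s, -, hb⟩ := exists_mem_support_of_mem_support_failBind hb
  exact ⟨a, s, ha, by simpa [eq_comm] using hb⟩

lemma isSubgaussianOnSome_walkStep {c : ℝ} (hc : 1 ≤ c) {μ : PMF (Option α)} {w : α → E}
    (h : IsSubgaussianOnSome c μ w) {x : E} (hx : ‖x‖ ≤ 1) {f : α → Bool → β} {w' : β → E}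
    (hf : ∀ a s, some a ∈ μ.support → w' (f a s) = cond s (w a - x) (w a + x)) :
    IsSubgaussianOnSome c (walkStep c x μ w f) w' := by
  intro θ
  simp only [walkStep, partialExpect_failBind, partialExpect_pure_some]
  calc _ ≤ partialExpect μ fun a => ENNReal.ofReal (Real.exp (⟪x, θ⟫ ^ 2 / 2)) *
        ENNReal.ofReal (Real.exp ⟪w a, θ - (⟪x, θ⟫ / c) • x⟫) :=
        partialExpect_mono fun a ha => by
          simpa only [hf a _ ha] using partialExpect_biasedCoin_exp_inner_le c (w a) x θ
    _ ≤ ENNReal.ofReal (Real.exp (⟪x, θ⟫ ^ 2 / 2)) *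
        ENNReal.ofReal (Real.exp (c / 2 * ‖θ - (⟪x, θ⟫ / c) • x‖ ^ 2)) := by
        rw [partialExpect_const_mul]
        gcongr
        exact h _
    _ ≤ ENNReal.ofReal (Real.exp (c / 2 * ‖θ‖ ^ 2)) := by
        rw [← ENNReal.ofReal_mul (by positivity)]
        exact ENNReal.ofReal_le_ofReal (exp_mul_exp_norm_sub_le hc hx θ)

lemma walkStep_apply_none_le {c : ℝ} (hc : 0 < c) {μ : PMF (Option α)}
    {w : α → E} (h : IsSubgaussianOnSome c μ w) {x : E} (hx : ‖x‖ ≤ 1) (f : α → Bool → β) :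
    walkStep c x μ w f none ≤ μ none + tailBound c := by
  rw [walkStep, failBind_apply_none]
  gcongr
  refine (partialExpect_mono fun a _ => ?_).trans (h.tail_le_of_norm_le_one hc.le hx)
  rw [failBind_apply_none]
  rcases lt_or_ge c |⟪w a, x⟫| with hy | hy
  · rw [Set.indicator_of_mem (by exact hy), biasedCoin_of_one_lt]
    · simp [partialExpect_pure_none]
    · rwa [abs_div, abs_of_pos hc, one_lt_div hc]
  · rw [biasedCoin_apply_none]
    · simp [partialExpect]
    · rwa [abs_div, abs_of_pos hc, div_le_one hc]

end SelfBalancingWalk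

section Thinning

variable {ι E : Type*} [NormedAddCommGroup E] [InnerProductSpace ℝ E]

/-- The error of estimating the sum of `u` over `A` by `W` times its sum over `B`. -/
def thinningError (u : ι → E) (W : ℝ) (A B : Finset ι) : E := ∑ i ∈ A, u i - W • ∑ i ∈ B, u i

lemma thinningError_mul (u : ι → E) (W W' : ℝ) (A A' B : Finset ι) :
    thinningError u (W * W') A B = thinningError u W A A' + W • thinningError u W' A' B := by
  simp only [thinningError, smul_sub, mul_smul]
  abel

lemma abs_inner_thinningError_mul_le (u : ι → E) (W W' : ℝ) (A A' B : Finset ι) (θ : E) :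
    |⟪thinningError u (W * W') A B, θ⟫| ≤
      |⟪thinningError u W A A', θ⟫| + |W| * |⟪thinningError u W' A' B, θ⟫| := by
  rw [thinningError_mul u W W' A A' B, inner_add_left, real_inner_smul_left, ← abs_mul]
  exact abs_add_le _ _

lemma thinningError_const_smul (a : ℝ) (u : ι → E) (W : ℝ) (A B : Finset ι) :
    thinningError (fun i => a • u i) W A B = a • thinningError u W A B := by
  simp only [thinningError, ← Finset.smul_sum, smul_sub, smul_comm a W]

lemma thinningError_one_self (u : ι → E) (A : Finset ι) : thinningError u 1 A A = 0 := by
  rw [thinningError, one_smul, sub_self]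

lemma thinningError_insert_insert [DecidableEq ι] (u : ι → E) {p q : ι} {A B : Finset ι}
    (hp : p ∉ insert q A) (hq : q ∉ A) (hBA : B ⊆ A) (s : Bool) :
    thinningError u 2 (insert p (insert q A)) (insert (cond s p q) B) =
      cond s (thinningError u 2 A B - (u p - u q)) (thinningError u 2 A B + (u p - u q)) := by
  have hpB : p ∉ B := fun h => hp (Finset.mem_insert_of_mem (hBA h))
  have hqB : q ∉ B := fun h => hq (hBA h)
  rw [thinningError, thinningError, Finset.sum_insert hp, Finset.sum_insert hq]
  cases s
  · rw [cond_false, cond_false, Finset.sum_insert hqB]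
    module
  · rw [cond_true, cond_true, Finset.sum_insert hpB]
    module

lemma toOuterMeasure_bind_thinningError_le {u : ι → E} {W W' a b : ℝ} {δ δ' : ℝ≥0∞}
    {A : Finset ι} {μ : PMF (Finset ι)} {ν : Finset ι → PMF (Finset ι)} {θ : E}
    (hμ : μ.toOuterMeasure {A' | a < |⟪thinningError u W A A', θ⟫|} ≤ δ)
    (hν : ∀ A' ∈ μ.support,
      (ν A').toOuterMeasure {B | b < |⟪thinningError u W' A' B, θ⟫|} ≤ δ') :
    (μ.bind ν).toOuterMeasure {B | a + |W| * b < |⟪thinningError u (W * W') A B, θ⟫|} ≤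
      δ + δ' := by
  refine toOuterMeasure_bind_le_add hμ fun A' hA' hgood =>
    ((ν A').toOuterMeasure.mono fun B hB => ?_).trans (hν A' hA')
  rw [Set.mem_ofPred_eq] at hgood hB ⊢
  have htriangle := hB.trans_le (abs_inner_thinningError_mul_le u W W' A A' B θ)
  exact lt_of_mul_lt_mul_left (by linarith) (abs_nonneg W)

lemma exists_halving_option {u : ι → E} (hu : ∀ i j, ‖u i - u j‖ ≤ 1) {c : ℝ}
    (hc : 1 ≤ c) (m : ℕ) (A : Finset ι) (hA : A.card = 2 * m) :
    ∃ μ : PMF (Option (Finset ι)), IsSubgaussianOnSome c μ (thinningError u 2 A) ∧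
      μ none ≤ m * tailBound c ∧ ∀ B, some B ∈ μ.support → B ⊆ A ∧ B.card = m := by
  classical
  induction m generalizing A with
  | zero =>
    obtain rfl : A = ∅ := by simpa using hA
    refine ⟨PMF.pure (some ∅), fun θ => ?_, by simp, fun B hB => ?_⟩
    · rw [partialExpect_pure_some]
      refine ENNReal.ofReal_le_ofReal (Real.exp_le_exp.2 ?_)
      simp only [thinningError, Finset.sum_empty, smul_zero, sub_zero, inner_zero_left]
      positivity
    · obtain rfl : B = ∅ := by simpa using hB
      simp
  | succ m ih =>
    obtain ⟨p, A₁, hp, rfl, hA₁⟩ := Finset.card_eq_succ.1 (show A.card = (2 * m + 1) + 1 by omega)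
    obtain ⟨q, A', hq, rfl, hA'⟩ := Finset.card_eq_succ.1 hA₁
    obtain ⟨μ, hμ, hnone, hsupp⟩ := ih A' hA'
    refine ⟨walkStep c (u p - u q) μ (thinningError u 2 A') fun B s => insert (cond s p q) B,
      isSubgaussianOnSome_walkStep hc hμ (hu p q) fun B s hB =>
        thinningError_insert_insert u hp hq (hsupp B hB).1 s,
      (walkStep_apply_none_le (by linarith) hμ (hu p q) _).trans ?_, fun B hB => ?_⟩
    · rw [Nat.cast_succ, add_mul, one_mul]
      gcongr
    · obtain ⟨B', s, hB', rfl⟩ := exists_of_mem_support_walkStep hB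
      obtain ⟨hB'A', hB'card⟩ := hsupp B' hB'
      have hmem : cond s p q ∈ insert p (insert q A') := by cases s <;> simp
      have hnotMem : cond s p q ∉ B' := by
        cases s
        exacts [fun h => hq (hB'A' h), fun h => hp (Finset.mem_insert_of_mem (hB'A' h))]
      refine ⟨Finset.insert_subset hmem (hB'A'.trans ?_), ?_⟩
      · exact (Finset.subset_insert _ _).trans (Finset.subset_insert _ _)
      · rw [Finset.card_insert_of_notMem hnotMem, hB'card]

lemma exists_halving {u : ι → E} (hu : ∀ i j, ‖u i - u j‖ ≤ 1) {c : ℝ}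
    (hc : 1 ≤ c) (m : ℕ) (A : Finset ι) (hA : A.card = 2 * m) :
    ∃ μ : PMF (Finset ι), (∀ B ∈ μ.support, B ⊆ A ∧ B.card = m) ∧ ∀ θ : E,
      μ.toOuterMeasure {B | c * ‖θ‖ < |⟪thinningError u 2 A B, θ⟫|} ≤ (m + 1) * tailBound c := by
  obtain ⟨μ, hμ, hnone, hsupp⟩ := exists_halving_option hu hc m A hA
  obtain ⟨B₀, hB₀⟩ := Finset.exists_subset_card_eq (show m ≤ A.card by omega)
  refine ⟨μ.map fun o => o.getD B₀, fun B hB => ?_, fun θ => ?_⟩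
  · obtain ⟨_ | B', hB', rfl⟩ := (PMF.mem_support_map_iff _ _ _).1 hB
    · exact hB₀
    · exact hsupp B' hB'
  · refine (toOuterMeasure_map_getD_le μ B₀ _).trans ?_
    rw [add_mul, one_mul]
    exact add_le_add hnone (hμ.tail_le (by linarith) θ)

lemma exists_thinning {u : ι → E} (hu : ∀ i j, ‖u i - u j‖ ≤ 1) {c : ℝ}
    (hc : 1 ≤ c) (t T : ℕ) (A : Finset ι) (hA : A.card = t * 2 ^ T) :
    ∃ μ : PMF (Finset ι), (∀ B ∈ μ.support, B ⊆ A ∧ B.card = t) ∧ ∀ θ : E,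
      μ.toOuterMeasure {B | (2 ^ T - 1) * (c * ‖θ‖) < |⟪thinningError u (2 ^ T) A B, θ⟫|} ≤
        (A.card + T) * tailBound c := by
  induction T generalizing A with
  | zero =>
    refine ⟨PMF.pure A, fun B hB => ?_, fun θ => ?_⟩
    · obtain rfl : B = A := by simpa using hB
      exact ⟨subset_rfl, by simpa using hA⟩
    · simp [thinningError_one_self]
  | succ T ih =>
    have hcard : A.card = 2 * (t * 2 ^ T) := by rw [hA]; ring
    obtain ⟨μ, hμ, htail⟩ := exists_halving hu hc (t * 2 ^ T) A hcard
    have : Nonempty (PMF (Finset ι)) := ⟨PMF.pure ∅⟩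
    choose! ν hν hνtail using ih
    refine ⟨μ.bind ν, fun B hB => ?_, fun θ => ?_⟩
    · obtain ⟨A', hA', hB⟩ := (PMF.mem_support_bind_iff _ _ _).1 hB
      obtain ⟨hA'A, hA'card⟩ := hμ A' hA'
      exact ⟨(hν A' hA'card B hB).1.trans hA'A, (hν A' hA'card B hB).2⟩
    · have hthreshold :
          (2 ^ (T + 1) - 1) * (c * ‖θ‖) = c * ‖θ‖ + |2| * ((2 ^ T - 1) * (c * ‖θ‖)) := by
        rw [abs_two]
        ring
      have hνtail' (A') (hA' : A' ∈ μ.support) := (hμ A' hA').2 ▸ hνtail A' (hμ A' hA').2 θ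
      rw [hthreshold, pow_succ']
      refine (toOuterMeasure_bind_thinningError_le (htail θ) hνtail').trans_eq ?_
      rw [hcard]
      push_cast
      ring

lemma exists_thinning_of_norm_le {u : ι → E} {D : ℝ} (hD : 0 ≤ D) (hu : ∀ i, ‖u i‖ ≤ D) {c : ℝ}
    (hc : 1 ≤ c) (t T : ℕ) (A : Finset ι) (hA : A.card = t * 2 ^ T) :
    ∃ μ : PMF (Finset ι), (∀ B ∈ μ.support, B ⊆ A ∧ B.card = t) ∧ ∀ θ : E,
      μ.toOuterMeasure {B | 2 * D * 2 ^ T * (c * ‖θ‖) < |⟪thinningError u (2 ^ T) A B, θ⟫|} ≤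
        (A.card + T) * tailBound c := by
  have hu' (i j : ι) : ‖(2 * D)⁻¹ • u i - (2 * D)⁻¹ • u j‖ ≤ 1 := by
    rw [← smul_sub]
    exact norm_inv_smul_le_one ((norm_sub_le _ _).trans (by linarith [hu i, hu j]))
  have hscale (i : ι) : (2 * D) • (2 * D)⁻¹ • u i = u i :=
    smul_inv_smul_of_norm_le ((hu i).trans (by linarith))
  obtain ⟨μ, hμ, htail⟩ := exists_thinning hu' hc t T A hA
  refine ⟨μ, hμ, fun θ => (μ.toOuterMeasure.mono fun B hB => ?_).trans (htail θ)⟩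
  rw [Set.mem_ofPred_eq, ← funext hscale, thinningError_const_smul, real_inner_smul_left, abs_mul,
    abs_of_nonneg (by positivity), mul_assoc] at hB
  have h := lt_of_mul_lt_mul_left hB (by positivity)
  refine lt_of_le_of_lt ?_ h
  gcongr
  linarith

end Thinning

section WeightedValues

variable {ι κ H F : Type*} [NormedAddCommGroup H] [InnerProductSpace ℝ H] [NormedAddCommGroup F]
  [InnerProductSpace ℝ F]

lemma norm_le_sqrt_card_mul_of_abs_inner_le [Fintype κ] (b : OrthonormalBasis κ ℝ F) {x : F}
    {M : ℝ} (hM : 0 ≤ M) (h : ∀ j, |⟪x, b j⟫| ≤ M) : ‖x‖ ≤ √(Fintype.card κ) * M := by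
  rw [← Real.sqrt_sq hM, ← Real.sqrt_mul (Nat.cast_nonneg _)]
  refine Real.le_sqrt_of_sq_le ?_
  calc ‖x‖ ^ 2 = ∑ j, ‖⟪x, b j⟫‖ ^ 2 := (b.sum_sq_norm_inner_left x).symm
    _ ≤ ∑ _j : κ, M ^ 2 := Finset.sum_le_sum fun j _ => by gcongr; exact h j
    _ = Fintype.card κ * M ^ 2 := by simp

lemma inner_thinningError_tmul (φ : ι → H) (v : ι → F) (W : ℝ) (A B : Finset ι) (ψ : H) (y : F) :
    ⟪thinningError (fun i => φ i ⊗ₜ[ℝ] v i) W A B, ψ ⊗ₜ[ℝ] y⟫ =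
      ⟪thinningError (fun i => ⟪φ i, ψ⟫ • v i) W A B, y⟫ := by
  simp only [thinningError, inner_sub_left, real_inner_smul_left, sum_inner,
    TensorProduct.inner_tmul]

lemma exists_weighted_thinning [FiniteDimensional ℝ F] {φ : ι → H} {v : ι → F} {D : ℝ}
    (hD : 0 ≤ D) (hφv : ∀ i, ‖φ i‖ * ‖v i‖ ≤ D) {c : ℝ} (hc : 1 ≤ c) (t T : ℕ) (A : Finset ι)
    (hA : A.card = t * 2 ^ T) :
    ∃ μ : PMF (Finset ι), (∀ B ∈ μ.support, B ⊆ A ∧ B.card = t) ∧ ∀ ψ : H,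
      μ.toOuterMeasure {B | √(Module.finrank ℝ F) * (2 * D * 2 ^ T * (c * ‖ψ‖)) <
          ‖thinningError (fun i => ⟪φ i, ψ⟫ • v i) (2 ^ T) A B‖} ≤
        Module.finrank ℝ F * ((A.card + T) * tailBound c) := by
  obtain ⟨μ, hμ, htail⟩ := exists_thinning_of_norm_le (u := fun i => φ i ⊗ₜ[ℝ] v i) hD
    (fun i => (TensorProduct.norm_tmul _ _).trans_le (hφv i)) hc t T A hA
  refine ⟨μ, hμ, fun ψ => ?_⟩
  let b := stdOrthonormalBasis ℝ F
  calc _ ≤ μ.toOuterMeasure (⋃ j, {B | 2 * D * 2 ^ T * (c * ‖ψ ⊗ₜ[ℝ] b j‖) <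
          |⟪thinningError (fun i => φ i ⊗ₜ[ℝ] v i) (2 ^ T) A B, ψ ⊗ₜ[ℝ] b j⟫|}) := by
        refine μ.toOuterMeasure.mono fun B hB => ?_
        contrapose! hB
        simp only [Set.mem_iUnion, Set.mem_ofPred_eq, not_exists, not_lt, TensorProduct.norm_tmul,
          b.norm_eq_one, mul_one, inner_thinningError_tmul] at hB ⊢
        simpa using norm_le_sqrt_card_mul_of_abs_inner_le b (by positivity) hB
    _ ≤ ∑ _j : Fin (Module.finrank ℝ F), (A.card + T) * tailBound c :=
        (MeasureTheory.measure_iUnion_fintype_le _ _).trans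
          (Finset.sum_le_sum fun j _ => htail (ψ ⊗ₜ b j))
    _ = _ := by simp

end WeightedValues

section Softmax

variable {ι E F : Type*} [NormedAddCommGroup E] [InnerProductSpace ℝ E] [NormedAddCommGroup F]
  [InnerProductSpace ℝ F] [FiniteDimensional ℝ F]

lemma exists_softmax_thinning {σ : ℝ} (hσ : 0 ≤ σ) {r V c : ℝ} (hV : 0 ≤ V) (hc : 1 ≤ c)
    {k : ι → E} (hk : ∀ i, ‖k i‖ ≤ r) {v : ι → F} (hv : ∀ i, ‖v i‖ ≤ V) (t T : ℕ) (A : Finset ι)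
    (hA : A.card = t * 2 ^ T) :
    ∃ μ : PMF (Finset ι), (∀ B ∈ μ.support, B ⊆ A ∧ B.card = t) ∧ ∀ q : E, ‖q‖ ≤ r →
      μ.toOuterMeasure {B | √(Module.finrank ℝ F) * (2 * Real.exp (r ^ 2 / σ) * V * 2 ^ T * c) <
          ‖thinningError (fun i => Real.exp (⟪k i, q⟫ / σ) • v i) (2 ^ T) A B‖} ≤
        Module.finrank ℝ F * ((A.card + T) * tailBound c) := by
  obtain ⟨H, _, _, φ, hφ⟩ := exists_inner_eq_exp_inner_div (E := E) hσ
  set ρ := √(Real.exp (r ^ 2 / σ))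
  have hρ_sq : Real.exp (r ^ 2 / σ) = ρ * ρ := (Real.mul_self_sqrt (Real.exp_nonneg _)).symm
  have hφ_norm (x : E) (hx : ‖x‖ ≤ r) : ‖φ x‖ ≤ ρ := by
    refine Real.le_sqrt_of_sq_le ?_
    rw [← real_inner_self_eq_norm_sq, hφ, real_inner_self_eq_norm_sq]
    gcongr
  obtain ⟨μ, hμ, htail⟩ := exists_weighted_thinning (φ := fun i => φ (k i)) (v := v)
    (D := ρ * V) (by positivity)
    (fun i => mul_le_mul (hφ_norm _ (hk i)) (hv i) (norm_nonneg _) (Real.sqrt_nonneg _))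
    hc t T A hA
  refine ⟨μ, hμ, fun q hq => (μ.toOuterMeasure.mono fun B hB => ?_).trans (htail (φ q))⟩
  simp only [hφ, Set.mem_ofPred_eq] at hB ⊢
  refine lt_of_le_of_lt ?_ hB
  calc √(Module.finrank ℝ F) * (2 * (ρ * V) * 2 ^ T * (c * ‖φ q‖))
      ≤ √(Module.finrank ℝ F) * (2 * (ρ * V) * 2 ^ T * (c * ρ)) := by
        gcongr
        exact hφ_norm q hq
    _ = √(Module.finrank ℝ F) * (2 * Real.exp (r ^ 2 / σ) * V * 2 ^ T * c) := by
        rw [hρ_sq]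
        ring

end Softmax

section Levels

/-- The tuple of levels `0, …, T` in which only the top level `T` is occupied, by `B`. -/
def topLevel {α : Type*} (T : ℕ) (B : Finset α) : Fin (T + 1) → Finset α :=
  fun l => if l = Fin.last T then B else ∅

variable {α M : Type*}

lemma card_topLevel_le (T : ℕ) (B : Finset α) (l : Fin (T + 1)) :
    (topLevel T B l).card ≤ B.card := by
  unfold topLevel
  split_ifs <;> simp

lemma disjoint_topLevel (T : ℕ) (B : Finset α) {l l' : Fin (T + 1)} (h : l ≠ l') :
    Disjoint (topLevel T B l) (topLevel T B l') := by
  unfold topLevel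
  split_ifs with hl hl'
  · exact absurd (hl.trans hl'.symm) h
  all_goals simp

lemma sum_topLevel [AddCommGroup M] [Module ℝ M] (T : ℕ) (B : Finset α) (f : α → M) :
    ∑ l : Fin (T + 1), (2 : ℝ) ^ (l : ℕ) • ∑ i ∈ topLevel T B l, f i =
      (2 : ℝ) ^ T • ∑ i ∈ B, f i := by
  rw [Finset.sum_eq_single_of_mem (Fin.last T) (Finset.mem_univ _)
    fun l _ hl => by simp [topLevel, hl]]
  simp [topLevel]

end Levels

section Parameters

lemma mul_tailBound_log_le {n s T : ℕ} (hn : 2 ≤ n) (hs : 0 < s) (hT : T ≤ n) :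
    (s * ((n + T) * tailBound (10 * Real.log (s * n))) : ℝ≥0∞) ≤
      ENNReal.ofReal (1 / (n : ℝ) ^ 2) := by
  have hn' : (2 : ℝ) ≤ n := by exact_mod_cast hn
  have hs' : (1 : ℝ) ≤ s := by exact_mod_cast hs
  have hT' : (T : ℝ) ≤ n := by exact_mod_cast hT
  have hexp : Real.exp (-(10 * Real.log (s * n)) / 2) = ((s * n : ℝ) ^ 5)⁻¹ := by
    rw [show -(10 * Real.log (s * n)) / 2 = -((5 : ℕ) * Real.log (s * n)) by push_cast; ring,
      Real.exp_neg, Real.exp_nat_mul, Real.exp_log (by positivity)]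
  have hcast : (s * (n + T) : ℝ≥0∞) = ENNReal.ofReal (s * (n + T) : ℝ) := by
    exact_mod_cast (ENNReal.ofReal_natCast (s * (n + T))).symm
  rw [tailBound, hexp, ← mul_assoc, hcast, ← ENNReal.ofReal_mul (by positivity)]
  refine ENNReal.ofReal_le_ofReal ?_
  rw [← mul_assoc, ← div_eq_mul_inv, div_le_div_iff₀ (by positivity) (by positivity)]
  calc (s * (n + T) * 2 * n ^ 2 : ℝ) ≤ s * (n + n) * 2 * n ^ 2 := by gcongr
    _ = s * 2 ^ 2 * n ^ 3 := by ring
    _ ≤ s ^ 5 * n ^ 2 * n ^ 3 := by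
        gcongr
        exact le_self_pow₀ hs' (by norm_num)
    _ = 1 * (s * n) ^ 5 := by ring

lemma sqrt_mul_exp_mul_log_le {m L ε σ r V t W : ℝ} (hε : 0 < ε) (hV : 0 ≤ V) (hW : 0 ≤ W)
    (hL : 2 / 3 ≤ L) (ht : 30 * √m * L ^ 2 * Real.exp (2 * r ^ 2 / σ) / ε ≤ t) :
    √m * (2 * Real.exp (r ^ 2 / σ) * V * W * (10 * L)) ≤
      ε * (t * W) * Real.exp (-r ^ 2 / σ) * V := by
  have hexp : Real.exp (2 * r ^ 2 / σ) * Real.exp (-r ^ 2 / σ) = Real.exp (r ^ 2 / σ) := by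
    rw [← Real.exp_add]
    ring_nf
  rw [div_le_iff₀ hε] at ht
  have hL_sq : 20 * L ≤ 30 * L ^ 2 := by nlinarith
  calc √m * (2 * Real.exp (r ^ 2 / σ) * V * W * (10 * L))
      = 20 * L * (√m * Real.exp (r ^ 2 / σ) * V * W) := by ring
    _ ≤ 30 * L ^ 2 * (√m * Real.exp (r ^ 2 / σ) * V * W) := by gcongr
    _ = 30 * √m * L ^ 2 * Real.exp (2 * r ^ 2 / σ) * (Real.exp (-r ^ 2 / σ) * V * W) := by
        rw [← hexp]
        ring
    _ ≤ t * ε * (Real.exp (-r ^ 2 / σ) * V * W) := by gcongr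
    _ = ε * (t * W) * Real.exp (-r ^ 2 / σ) * V := by ring

lemma two_thirds_le_log_mul {n s : ℕ} (hn : 2 ≤ n) (hs : 0 < s) : 2 / 3 ≤ Real.log (s * n) := by
  have hmul : (2 : ℝ) ≤ s * n := by exact_mod_cast hn.trans (Nat.le_mul_of_pos_left n hs)
  linarith [Real.log_two_gt_d9, Real.log_le_log two_pos hmul]

end Parameters

section MergeAndReduce

variable {ι E F : Type*} [Fintype ι] [Nonempty ι] [NormedAddCommGroup E] [InnerProductSpace ℝ E]
  [NormedAddCommGroup F] [InnerProductSpace ℝ F] [FiniteDimensional ℝ F] [Nontrivial F]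

lemma exists_softmax_thinning_of_le {σ r ε V : ℝ} (hσ : 0 ≤ σ) (hε : 0 < ε) (hV : 0 ≤ V)
    {k : ι → E} (hk : ∀ i, ‖k i‖ ≤ r) {v : ι → F} (hv : ∀ i, ‖v i‖ ≤ V) {t T : ℕ}
    (ht : 30 * √(Module.finrank ℝ F) * Real.log (Module.finrank ℝ F * Fintype.card ι) ^ 2 *
      Real.exp (2 * r ^ 2 / σ) / ε ≤ t) (hcard : Fintype.card ι = t * 2 ^ T) :
    ∃ μ : PMF (Finset ι), (∀ B ∈ μ.support, B.card = t) ∧ ∀ q : E, ‖q‖ ≤ r →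
      μ.toOuterMeasure {B | ε * Fintype.card ι * Real.exp (-r ^ 2 / σ) * V <
          ‖thinningError (fun i => Real.exp (⟪k i, q⟫ / σ) • v i) (2 ^ T) Finset.univ B‖} ≤
        ENNReal.ofReal (1 / (Fintype.card ι : ℝ) ^ 2) := by
  rcases T.eq_zero_or_pos with rfl | hT
  · refine ⟨PMF.pure Finset.univ, fun B hB => ?_, fun q _ => ?_⟩
    · obtain rfl : B = Finset.univ := by simpa using hB
      simpa using hcard
    · rw [PMF.toOuterMeasure_pure_apply, if_neg]
      · exact zero_le
      · rw [Set.mem_ofPred_eq, pow_zero, thinningError_one_self, norm_zero, not_lt]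
        positivity
  have ht_pos : 0 < t := Nat.pos_of_mul_pos_right (hcard ▸ Fintype.card_pos)
  have hTn : T < Fintype.card ι :=
    hcard ▸ Nat.lt_two_pow_self.trans_le (Nat.le_mul_of_pos_left _ ht_pos)
  have hn : 2 ≤ Fintype.card ι := by omega
  have hL := two_thirds_le_log_mul hn (Module.finrank_pos (R := ℝ) (M := F))
  obtain ⟨μ, hμ, htail⟩ := exists_softmax_thinning hσ hV
    (c := 10 * Real.log (Module.finrank ℝ F * Fintype.card ι)) (by linarith) hk hv t T Finset.univ
    hcard
  refine ⟨μ, fun B hB => (hμ B hB).2, fun q hq => (μ.toOuterMeasure.mono fun B hB => ?_).trans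
    ((htail q hq).trans (mul_tailBound_log_le hn Module.finrank_pos hTn.le))⟩
  refine lt_of_le_of_lt (sqrt_mul_exp_mul_log_le hε hV (by positivity) hL ht) ?_
  rw [Set.mem_ofPred_eq, hcard] at hB
  exact_mod_cast hB

theorem stmt_12_general {σ r ε : ℝ} (hσ : 0 < σ) (hε : 0 < ε) {k : ι → E}
    (hk : ∀ i, ‖k i‖ ≤ r) (v : ι → F) {t T : ℕ}
    (ht : 30 * √(Module.finrank ℝ F) * Real.log (Module.finrank ℝ F * Fintype.card ι) ^ 2 *
      Real.exp (2 * r ^ 2 / σ) / ε ≤ t) (hcard : Fintype.card ι = t * 2 ^ T) :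
    ∃ μ : PMF (Fin (T + 1) → Finset ι),
      (∀ Cs ∈ μ.support, (∀ l, (Cs l).card ≤ t) ∧ ∀ l l', l ≠ l' → Disjoint (Cs l) (Cs l')) ∧
      ∀ q : E, ‖q‖ ≤ r → ENNReal.ofReal (1 - 1 / (Fintype.card ι : ℝ) ^ 2) ≤
        μ.toOuterMeasure {Cs : Fin (T + 1) → Finset ι |
          ‖(∑ i, Real.exp (⟪k i, q⟫ / σ) • v i) - ∑ l : Fin (T + 1), (2 : ℝ) ^ (l : ℕ) •
              ∑ i ∈ Cs l, Real.exp (⟪k i, q⟫ / σ) • v i‖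
            ≤ ε * Fintype.card ι * Real.exp (-r ^ 2 / σ) * ⨆ i, ‖v i‖} := by
  obtain ⟨μ, hμ, htail⟩ := exists_softmax_thinning_of_le hσ.le hε
    (Real.iSup_nonneg fun i => norm_nonneg (v i)) hk
    (le_ciSup (Set.finite_range fun i => ‖v i‖).bddAbove) ht hcard
  refine ⟨μ.map (topLevel T), fun Cs hCs => ?_, fun q hq => ?_⟩
  · obtain ⟨B, hB, rfl⟩ := (PMF.mem_support_map_iff _ _ _).1 hCs
    exact ⟨fun l => (card_topLevel_le T B l).trans (hμ B hB).le,
      fun l l' h => disjoint_topLevel T B h⟩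
  · rw [PMF.toOuterMeasure_map_apply]
    refine ofReal_one_sub_le_toOuterMeasure (by positivity)
      ((μ.toOuterMeasure.mono fun B hB => ?_).trans (htail q hq))
    simpa only [thinningError, Set.mem_compl_iff, Set.mem_preimage, Set.mem_ofPred_eq, not_le,
      sum_topLevel] using hB

end MergeAndReduce

/-- MergeAndReduce guarantee (Theorem 3.4) at the end of the stream: there is an absolute
constant `c > 0` such that for keys `k_i ∈ ℝ^d` with `‖k_i‖ ≤ r` and values `v_i ∈ ℝ^s`
(`s ≤ d`), with batch size `t = ⌈c √s (log(sn))² e^{2r²/√d}/ε⌉ ≤ n`, `n/t = 2^T`, there is a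
(finitely supported) distribution over tuples `(C^0, …, C^T)` of pairwise disjoint subsets of
`[n]`, each of size at most `t`, such that for every query `q` with `‖q‖ ≤ r`, with
probability at least `1 − 1/n²`, the weighted estimator `∑_l 2^l ∑_{i ∈ C^l} e^{⟨k_i,q⟩/√d} v_i`
approximates `∑_i e^{⟨k_i,q⟩/√d} v_i` up to error `ε n e^{−r²/√d} max_i ‖v_i‖`. -/
theorem stmt_12 :
    ∃ c : ℝ, 0 < c ∧
      ∀ (n d s : ℕ), 0 < n → 0 < d → 0 < s → s ≤ d →
        ∀ (r ε : ℝ), 0 < r → 0 < ε →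
          ∀ (k : Fin n → EuclideanSpace ℝ (Fin d)), (∀ i, ‖k i‖ ≤ r) →
            ∀ (v : Fin n → EuclideanSpace ℝ (Fin s)),
              ∀ (t T : ℕ),
                t = ⌈c * Real.sqrt s * (Real.log (s * n)) ^ 2
                      * Real.exp (2 * r ^ 2 / Real.sqrt d) / ε⌉₊ →
                t ≤ n → n = t * 2 ^ T →
                  ∃ μ : PMF (Fin (T + 1) → Finset (Fin n)),
                    (∀ Cs ∈ μ.support,
                        (∀ l, (Cs l).card ≤ t) ∧
                        ∀ l l', l ≠ l' → Disjoint (Cs l) (Cs l')) ∧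
                    ∀ q : EuclideanSpace ℝ (Fin d), ‖q‖ ≤ r →
                      ENNReal.ofReal (1 - 1 / (n : ℝ) ^ 2) ≤
                        μ.toOuterMeasure {Cs : Fin (T + 1) → Finset (Fin n) |
                          ‖(∑ i : Fin n, Real.exp (⟪k i, q⟫ / Real.sqrt d) • v i)
                            - ∑ l : Fin (T + 1), (2 : ℝ) ^ (l : ℕ) •
                                ∑ i ∈ Cs l, Real.exp (⟪k i, q⟫ / Real.sqrt d) • v i‖
                          ≤ ε * n * Real.exp (-r ^ 2 / Real.sqrt d)
                              * ⨆ i : Fin n, ‖v i‖} := by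
  refine ⟨30, by norm_num, fun n d s hn hd hs _ r ε _ hε k hk v t T ht _ hcard => ?_⟩
  have : NeZero n := ⟨hn.ne'⟩
  have : NeZero s := ⟨hs.ne'⟩
  simpa only [finrank_euclideanSpace_fin, Fintype.card_fin] using
    stmt_12_general (σ := √d) (by positivity) hε hk v
      (by simpa using ht ▸ Nat.le_ceil _) (by simpa using hcard)
end

section
/- There exists an absolute constant c > 0 such that the following holds. Let n, d be positive integers, let r > 0 and ε ∈ (0,1), let k_1, …, k_n ∈ ℝ^d satisfy ‖k_i‖₂ ≤ r for all i, let v_1, …, v_n ∈ ℝ^d, and let T = ⌈log₂ n⌉. Then there exists a (finitely supported) probability distribution over pairs of tuples ((K^0, …, K^T), (V^0, …, V^T)) of subsets of {1,…,n} with total size ∑_{l=0}^T (|K^l| + |V^l|) ≤ c · √d · exp(2r²/√d) · ε^{−1} · (log(2+n))^4, such that for every q ∈ ℝ^d with ‖q‖₂ ≤ r, with probability at least 1 − 1/n² over the choice of the tuples, the estimator z = ( ∑_{l=0}^T 2^l ∑_{i ∈ V^l} exp(⟨k_i, q⟩/√d) v_i ) / ( ∑_{l=0}^T 2^l ∑_{i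 ∈ K^l} exp(⟨k_i, q⟩/√d) ) satisfies ‖ z − Attn(q, K, V) ‖₂ ≤ ε · ‖softmax(K·q/√d)‖₂ · ‖V‖_F, where K ∈ ℝ^{n×d} has rows k_1, …, k_n, V ∈ ℝ^{n×d} has rows v_1, …, v_n, softmax(K·q/√d) is the vector with entries exp(⟨k_i,q⟩/√d)/∑_{j=1}^n exp(⟨k_j,q⟩/√d), Attn(q, K, V) = softmax(K·q/√d)^T · V = ∑_{i=1}^n softmax(K·q/√d)_i · v_i, and ‖V‖_F = (∑_{i=1}^n ‖v_i‖₂²)^{1/2}. -/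
open RealInnerProductSpace

/-!
The weight `exp (⟪k, q⟫ / s)` is an inner product `⟪φ k, φ q⟫`, because the exponential of a
positive semidefinite kernel is positive semidefinite. A signed sum of the vectors `v i ⊗ φ (k i)`
whose signs come from the self-balancing walk is sub-Gaussian in every direction, so keeping the
half of the indices that carries the minority sign, with doubled weights, changes the attention
numerator at any fixed query only by a deviation of logarithmic order. Repeating this `l` times
keeps a fraction `2⁻ˡ` of the indices and costs a factor `2ˡ` in the error. This is affordable for
the vectors with `‖v i‖` about `2⁻ˡ` times a threshold proportional to `‖V‖_F`, which are therefore
the ones treated at level `l`. The denominator is the special case `v i = 1`.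
-/

open scoped ENNReal Finset

universe u

section Kernel

open Matrix

theorem posSemidef_of_inner {X E : Type*} [NormedAddCommGroup E] [InnerProductSpace ℝ E]
    (f : X → E) : (of fun a b => ⟪f a, f b⟫).PosSemidef := by
  refine ⟨by ext a b; simp [real_inner_comm], fun x => ?_⟩
  have hsq : (x.sum fun a z => x.sum fun b w => star z * ⟪f a, f b⟫ * w)
      = ⟪x.sum fun a z => z • f a, x.sum fun b w => w • f b⟫ := by
    simp only [Finsupp.sum, sum_inner, inner_sum, real_inner_smul_left, real_inner_smul_right,
      star_trivial]
    refine Finset.sum_congr rfl fun a _ => Finset.sum_congr rfl fun b _ => ?_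
    rw [real_inner_comm]
    ring
  simpa only [of_apply, hsq] using real_inner_self_nonneg

variable {X : Type u} {M : Matrix X X ℝ}

theorem posSemidef_map_pow (hM : M.PosSemidef) (m : ℕ) : (M.map (· ^ m)).PosSemidef := by
  induction m with
  | zero =>
    have hone : M.map (· ^ 0) = of fun _ _ => ⟪(1 : ℝ), 1⟫ := by ext; simp
    exact hone ▸ posSemidef_of_inner fun _ => (1 : ℝ)
  | succ m ih =>
    have hsucc : M.map (· ^ (m + 1)) = M.map (· ^ m) ⊙ M := by ext; simp [pow_succ]
    exact hsucc ▸ ih.hadamard hM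

theorem posSemidef_map_exp (hM : M.PosSemidef) : (M.map Real.exp).PosSemidef := by
  refine ⟨hM.isHermitian.map _ fun _ => rfl, fun x => ?_⟩
  have hseries : HasSum
      (fun m : ℕ => x.sum fun a z => x.sum fun b w =>
        star z * ((m.factorial : ℝ)⁻¹ • M.map (· ^ m)) a b * w)
      (x.sum fun a z => x.sum fun b w => star z * M.map Real.exp a b * w) := by
    refine hasSum_sum fun a _ => hasSum_sum fun b _ => HasSum.mul_right _ (HasSum.mul_left _ ?_)
    have hexp := NormedSpace.expSeries_div_hasSum_exp (M a b)
    rw [← Real.exp_eq_exp_ℝ] at hexp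
    simpa only [Matrix.smul_apply, map_apply, smul_eq_mul, div_eq_inv_mul] using hexp
  have hpos : ∀ m : ℕ, 0 ≤ (m.factorial : ℝ)⁻¹ := fun m => by positivity
  exact hseries.nonneg fun m => ((posSemidef_map_pow hM m).smul (hpos m)).2 x

/-- Moore's theorem for real kernels. -/
theorem exists_inner_eq_of_posSemidef (hM : M.PosSemidef) :
    ∃ (H : Type u) (_ : NormedAddCommGroup H) (_ : InnerProductSpace ℝ H) (φ : X → H),
      ∀ a b, ⟪φ a, φ b⟫ = M a b := by
  let K : Matrix X X (ℝ →L[ℝ] ℝ) := M.map fun t => t • 1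
  have hK : K.PosSemidef := by
    have htfae := (RKHS.posSemidef_tfae (𝕜 := ℝ) (K := K)).out 0 2
    refine htfae.2 ⟨?_, fun x => ?_⟩
    · exact hM.isHermitian.map _ fun t => by simp
    · refine (hM.2 x).trans_eq <| Finset.sum_congr rfl fun a _ => Finset.sum_congr rfl fun b _ => ?_
      simp [K, ← hM.isHermitian.apply a b, mul_comm, mul_left_comm]
  have := Fact.mk hK
  refine ⟨RKHS.OfKernel K, inferInstance, inferInstance,
    fun a => RKHS.kerFun (RKHS.OfKernel K) a 1, fun a b => ?_⟩
  rw [← hM.isHermitian.apply, ← RKHS.kernel_inner, RKHS.OfKernel.kernel_ofKernel]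
  simp [K]

theorem exists_inner_eq_exp {E : Type u} [NormedAddCommGroup E] [InnerProductSpace ℝ E]
    {s : ℝ} (hs : 0 ≤ s) :
    ∃ (H : Type u) (_ : NormedAddCommGroup H) (_ : InnerProductSpace ℝ H) (φ : E → H),
      ∀ a b, ⟪φ a, φ b⟫ = Real.exp (⟪a, b⟫ / s) := by
  obtain ⟨H, _, _, φ, hφ⟩ := exists_inner_eq_of_posSemidef <| posSemidef_map_exp <|
    (posSemidef_of_inner fun a : E => a).smul (inv_nonneg.2 hs)
  exact ⟨H, ‹_›, ‹_›, φ, fun a b => by simp [hφ, div_eq_inv_mul]⟩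

end Kernel

section SelfBalancingWalk

open MeasureTheory ProbabilityTheory in
theorem cosh_add_mul_sinh_le_exp {m : ℝ} (hm : |m| ≤ 1) (t : ℝ) :
    Real.cosh t + m * Real.sinh t ≤ Real.exp (m * t + t ^ 2 / 2) := by
  obtain ⟨hm₁, hm₂⟩ := abs_le.1 hm
  let μ : Measure ℝ := ENNReal.ofReal ((1 + m) / 2) • Measure.dirac 1
    + ENNReal.ofReal ((1 - m) / 2) • Measure.dirac (-1)
  have hμ : IsProbabilityMeasure μ := ⟨by
    simp only [μ, Measure.coe_add, Measure.coe_smul, Pi.add_apply, Pi.smul_apply, measure_univ,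
      smul_eq_mul, mul_one]
    rw [← ENNReal.ofReal_add (by linarith) (by linarith), ENNReal.ofReal_eq_one]
    ring⟩
  have hintegral (f : ℝ → ℝ) : ∫ x, f x ∂μ = (1 + m) / 2 * f 1 + (1 - m) / 2 * f (-1) := by
    have hint (a y : ℝ) : Integrable f (ENNReal.ofReal a • Measure.dirac y) :=
      (integrable_dirac (by simp)).smul_measure ENNReal.ofReal_ne_top
    rw [integral_add_measure (hint _ _) (hint _ _), integral_smul_measure, integral_smul_measure,
      integral_dirac, integral_dirac, ENNReal.toReal_ofReal (by linarith),
      ENNReal.toReal_ofReal (by linarith), smul_eq_mul, smul_eq_mul]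
  have hmean : ∫ x, id x ∂μ = m := by
    rw [hintegral]
    simp only [id]
    ring
  have hbounded : ∀ᵐ x ∂μ, id x ∈ Set.Icc (-1 : ℝ) 1 := by
    simp [μ, ae_add_measure_iff, Measure.ae_smul_measure, ae_dirac_eq]
  have hmgf := (hasSubgaussianMGF_of_mem_Icc (X := id) aemeasurable_id hbounded).mgf_le t
  rw [hmean] at hmgf
  simp only [mgf, hintegral, id] at hmgf
  norm_num at hmgf
  calc Real.cosh t + m * Real.sinh t
      = Real.exp (m * t) *
          ((1 + m) / 2 * Real.exp (t * (1 - m)) + (1 - m) / 2 * Real.exp (t * (-1 - m))) := by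
        rw [mul_add, mul_left_comm, mul_left_comm _ ((1 - m) / 2), ← Real.exp_add, ← Real.exp_add,
          Real.cosh_eq, Real.sinh_eq]
        ring_nf
    _ ≤ Real.exp (m * t) * Real.exp (t ^ 2 / 2) := by gcongr
    _ = Real.exp (m * t + t ^ 2 / 2) := (Real.exp_add _ _).symm

variable {ι E : Type*} [NormedAddCommGroup E] [InnerProductSpace ℝ E] {c : ℝ}

/-- The weights `p` on the finite set `s` make the vector `w` sub-Gaussian with variance proxy `c`
in every direction. Taking `u = 0` shows that the total mass is at most one; it may be smaller, the
missing mass being that of killed walks. -/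
structure IsSubgaussianWeight {Ω : Type*} (s : Finset Ω) (p : Ω → ℝ) (w : Ω → E) (c : ℝ) :
    Prop where
  nonneg : ∀ ω ∈ s, 0 ≤ p ω
  sum_mul_exp_inner_le : ∀ u, ∑ ω ∈ s, p ω * Real.exp ⟪w ω, u⟫ ≤ Real.exp (c * ‖u‖ ^ 2 / 2)

namespace IsSubgaussianWeight

variable {Ω : Type*} {s : Finset Ω} {p : Ω → ℝ} {w : Ω → E}

theorem sum_le_one (hp : IsSubgaussianWeight s p w c) : ∑ ω ∈ s, p ω ≤ 1 := by
  simpa using hp.sum_mul_exp_inner_le 0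

theorem sum_filter_lt_abs_inner_le (hp : IsSubgaussianWeight s p w c) (hc : 0 ≤ c) (u : E) :
    ∑ ω ∈ s with c * ‖u‖ < |⟪w ω, u⟫|, p ω ≤ 2 * Real.exp (-c / 2) := by
  set e : E := ‖u‖⁻¹ • u
  have he : ‖e‖ ^ 2 ≤ 1 := by
    rw [sq_le_one_iff₀ (norm_nonneg _), norm_smul, norm_inv, norm_norm]
    exact inv_mul_le_one
  have hexp (ω : Ω) (hω : c * ‖u‖ < |⟪w ω, u⟫|) :
      1 ≤ Real.exp (-c) * (Real.exp ⟪w ω, e⟫ + Real.exp ⟪w ω, -e⟫) := by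
    have hu : 0 < ‖u‖ := by
      refine norm_pos_iff.2 fun hu => ?_
      simp [hu] at hω
    have hce : c ≤ |⟪w ω, e⟫| := by
      rw [real_inner_smul_right, abs_mul, abs_of_pos (inv_pos.2 hu), ← div_eq_inv_mul,
        le_div_iff₀ hu]
      exact hω.le
    rw [Real.exp_neg, inner_neg_right, ← div_eq_inv_mul, one_le_div (Real.exp_pos c)]
    exact (Real.exp_le_exp.2 hce).trans (Real.exp_abs_le _)
  calc ∑ ω ∈ s with c * ‖u‖ < |⟪w ω, u⟫|, p ω
      ≤ ∑ ω ∈ s with c * ‖u‖ < |⟪w ω, u⟫|,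
          p ω * (Real.exp (-c) * (Real.exp ⟪w ω, e⟫ + Real.exp ⟪w ω, -e⟫)) := by
        refine Finset.sum_le_sum fun ω hω => ?_
        obtain ⟨hωs, hωu⟩ := Finset.mem_filter.1 hω
        exact le_mul_of_one_le_right (hp.nonneg ω hωs) (hexp ω hωu)
    _ ≤ ∑ ω ∈ s, p ω * (Real.exp (-c) * (Real.exp ⟪w ω, e⟫ + Real.exp ⟪w ω, -e⟫)) := by
        refine Finset.sum_le_sum_of_subset_of_nonneg (Finset.filter_subset _ _) fun ω hω _ => ?_
        have := hp.nonneg ω hω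
        positivity
    _ = Real.exp (-c) *
          (∑ ω ∈ s, p ω * Real.exp ⟪w ω, e⟫ + ∑ ω ∈ s, p ω * Real.exp ⟪w ω, -e⟫) := by
        simp only [← Finset.sum_add_distrib, Finset.mul_sum]
        exact Finset.sum_congr rfl fun ω _ => by ring
    _ ≤ Real.exp (-c) * (Real.exp (c * ‖e‖ ^ 2 / 2) + Real.exp (c * ‖-e‖ ^ 2 / 2)) := by
        gcongr <;> exact hp.sum_mul_exp_inner_le _
    _ ≤ Real.exp (-c) * (Real.exp (c / 2) + Real.exp (c / 2)) := by
        rw [norm_neg]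
        gcongr <;> exact mul_le_of_le_one_right hc he
    _ = 2 * Real.exp (-c / 2) := by
        rw [← two_mul, mul_left_comm, ← Real.exp_add]
        ring_nf

end IsSubgaussianWeight

theorem mul_norm_sub_smul_sq_add_sq_le {x : E} (hx : ‖x‖ ≤ 1) (hc : 1 ≤ c) (u : E) :
    c * ‖u - (⟪x, u⟫ / c) • x‖ ^ 2 + ⟪x, u⟫ ^ 2 ≤ c * ‖u‖ ^ 2 := by
  have hc₀ : c ≠ 0 := by positivity
  have hxc : ‖x‖ ^ 2 ≤ c := (pow_le_one₀ (norm_nonneg x) hx).trans hc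
  calc c * ‖u - (⟪x, u⟫ / c) • x‖ ^ 2 + ⟪x, u⟫ ^ 2
      = c * ‖u‖ ^ 2 - ⟪x, u⟫ ^ 2 * (1 - ‖x‖ ^ 2 / c) := by
        rw [norm_sub_sq_real, real_inner_smul_right, real_inner_comm, norm_smul, mul_pow,
          Real.norm_eq_abs, sq_abs]
        field_simp
        ring
    _ ≤ c * ‖u‖ ^ 2 :=
        sub_le_self _ <| mul_nonneg (sq_nonneg _) <| sub_nonneg.2 <|
          (div_le_one₀ (by positivity)).2 hxc

/-- The bias `-⟪w, x⟫ / c` of the self-balancing walk at `w` towards the step `+x`. -/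
noncomputable def stepBias (c : ℝ) (w x : E) : ℝ := -⟪w, x⟫ / c

theorem step_mul_exp_inner_le {w x : E} (hbias : |stepBias c w x| ≤ 1) (u : E) :
    (1 + stepBias c w x) / 2 * Real.exp ⟪w + x, u⟫ + (1 - stepBias c w x) / 2 * Real.exp ⟪w - x, u⟫
      ≤ Real.exp ⟪w, u - (⟪x, u⟫ / c) • x⟫ * Real.exp (⟪x, u⟫ ^ 2 / 2) := by
  set m := stepBias c w x with hm
  calc (1 + m) / 2 * Real.exp ⟪w + x, u⟫ + (1 - m) / 2 * Real.exp ⟪w - x, u⟫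
      = Real.exp ⟪w, u⟫ * (Real.cosh ⟪x, u⟫ + m * Real.sinh ⟪x, u⟫) := by
        rw [inner_add_left, inner_sub_left, sub_eq_add_neg ⟪w, u⟫, Real.exp_add, Real.exp_add,
          Real.cosh_eq, Real.sinh_eq]
        ring
    _ ≤ Real.exp ⟪w, u⟫ * Real.exp (m * ⟪x, u⟫ + ⟪x, u⟫ ^ 2 / 2) := by
        gcongr
        exact cosh_add_mul_sinh_le_exp hbias _
    _ = Real.exp ⟪w, u - (⟪x, u⟫ / c) • x⟫ * Real.exp (⟪x, u⟫ ^ 2 / 2) := by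
        rw [← Real.exp_add, ← Real.exp_add, inner_sub_right, real_inner_smul_right, hm, stepBias]
        ring_nf

/-- The signed sum `∑ i ∈ B, x i - ∑ i ∈ A \ B, x i` for `B ⊆ A`. -/
def signedSum {ι E : Type*} [AddCommGroup E] (x : ι → E) (A B : Finset ι) : E :=
  2 • ∑ i ∈ B, x i - ∑ i ∈ A, x i

/-- The weights of the self-balancing walk after the step `±x a`, in terms of its weights `p` on
the subsets `B` of `A`, where `B` is the set of steps taken with sign `+`. Walks whose bias would
exceed one are killed. -/
noncomputable def stepWeight [DecidableEq ι] (c : ℝ) (x : ι → E) (A : Finset ι) (a : ι)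
    (p : Finset ι → ℝ) (B : Finset ι) : ℝ :=
  if |stepBias c (signedSum x A (B.erase a)) (x a)| ≤ 1 then
    p (B.erase a) * ((1 + (if a ∈ B then 1 else -1) *
      stepBias c (signedSum x A (B.erase a)) (x a)) / 2)
  else 0

theorem sum_stepWeight_mul [DecidableEq ι] (x : ι → E) {A : Finset ι} {a : ι} (ha : a ∉ A)
    (p : Finset ι → ℝ) (g : E → ℝ) :
    ∑ B ∈ (insert a A).powerset, stepWeight c x A a p B * g (signedSum x (insert a A) B)
      = ∑ B ∈ A.powerset with |stepBias c (signedSum x A B) (x a)| ≤ 1,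
          p B * ((1 + stepBias c (signedSum x A B) (x a)) / 2 * g (signedSum x A B + x a)
            + (1 - stepBias c (signedSum x A B) (x a)) / 2 * g (signedSum x A B - x a)) := by
  rw [Finset.sum_powerset_insert ha, ← Finset.sum_add_distrib, Finset.sum_filter]
  refine Finset.sum_congr rfl fun B hB => ?_
  have haB : a ∉ B := fun h => ha (Finset.mem_powerset.1 hB h)
  have hplus : signedSum x (insert a A) (insert a B) = signedSum x A B + x a := by
    simp only [signedSum, Finset.sum_insert ha, Finset.sum_insert haB]
    abel
  have hminus : signedSum x (insert a A) B = signedSum x A B - x a := by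
    simp only [signedSum, Finset.sum_insert ha]
    abel
  rw [hplus, hminus]
  simp only [stepWeight, Finset.erase_insert haB, Finset.erase_eq_of_notMem haB,
    Finset.mem_insert_self, haB, if_true, if_false]
  split_ifs <;> ring

theorem IsSubgaussianWeight.insert [DecidableEq ι] {x : ι → E} {A : Finset ι} {a : ι}
    (ha : a ∉ A) {p : Finset ι → ℝ} (hp : IsSubgaussianWeight A.powerset p (signedSum x A) c)
    (hxa : ‖x a‖ ≤ 1) (hc : 1 ≤ c) :
    IsSubgaussianWeight (insert a A).powerset (stepWeight c x A a p)
      (signedSum x (insert a A)) c where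
  nonneg B hB := by
    have hpB : 0 ≤ p (B.erase a) := hp.nonneg _ <|
      Finset.mem_powerset.2 (Finset.subset_insert_iff.1 (Finset.mem_powerset.1 hB))
    rw [stepWeight]
    split_ifs with hbias haB
    · exact mul_nonneg hpB (by linarith [(abs_le.1 hbias).1])
    · exact mul_nonneg hpB (by linarith [(abs_le.1 hbias).2])
    · exact le_rfl
  sum_mul_exp_inner_le u := by
    set u' := u - (⟪x a, u⟫ / c) • x a
    rw [sum_stepWeight_mul x ha p fun w => Real.exp ⟪w, u⟫]
    calc _ ≤ ∑ B ∈ A.powerset with |stepBias c (signedSum x A B) (x a)| ≤ 1,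
            p B * (Real.exp ⟪signedSum x A B, u'⟫ * Real.exp (⟪x a, u⟫ ^ 2 / 2)) := by
          refine Finset.sum_le_sum fun B hB => ?_
          obtain ⟨hBA, hbias⟩ := Finset.mem_filter.1 hB
          exact mul_le_mul_of_nonneg_left (step_mul_exp_inner_le hbias u) (hp.nonneg B hBA)
      _ ≤ ∑ B ∈ A.powerset,
            p B * (Real.exp ⟪signedSum x A B, u'⟫ * Real.exp (⟪x a, u⟫ ^ 2 / 2)) := by
          refine Finset.sum_le_sum_of_subset_of_nonneg (Finset.filter_subset _ _) fun B hB _ => ?_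
          have := hp.nonneg B hB
          positivity
      _ = (∑ B ∈ A.powerset, p B * Real.exp ⟪signedSum x A B, u'⟫) *
            Real.exp (⟪x a, u⟫ ^ 2 / 2) := by
          simp only [Finset.sum_mul, mul_assoc]
      _ ≤ Real.exp (c * ‖u'‖ ^ 2 / 2) * Real.exp (⟪x a, u⟫ ^ 2 / 2) := by
          gcongr
          exact hp.sum_mul_exp_inner_le u'
      _ ≤ Real.exp (c * ‖u‖ ^ 2 / 2) := by
          rw [← Real.exp_add, ← add_div]
          gcongr
          exact mul_norm_sub_smul_sq_add_sq_le hxa hc u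

theorem sub_two_mul_exp_le_sum_stepWeight [DecidableEq ι] {x : ι → E} {A : Finset ι} {a : ι}
    (ha : a ∉ A) {p : Finset ι → ℝ} (hp : IsSubgaussianWeight A.powerset p (signedSum x A) c)
    (hxa : ‖x a‖ ≤ 1) (hc : 0 < c) :
    ∑ B ∈ A.powerset, p B - 2 * Real.exp (-c / 2)
      ≤ ∑ B ∈ (insert a A).powerset, stepWeight c x A a p B := by
  have hkilled : ∑ B ∈ A.powerset with ¬ |stepBias c (signedSum x A B) (x a)| ≤ 1, p B
      ≤ 2 * Real.exp (-c / 2) := by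
    refine le_trans (Finset.sum_le_sum_of_subset_of_nonneg (fun B hB => ?_) fun B hB _ => ?_)
      (hp.sum_filter_lt_abs_inner_le hc.le (x a))
    · obtain ⟨hBA, hbias⟩ := Finset.mem_filter.1 hB
      rw [stepBias, abs_div, abs_neg, abs_of_pos hc, div_le_one₀ hc, not_le] at hbias
      exact Finset.mem_filter.2 ⟨hBA, (mul_le_of_le_one_right hc.le hxa).trans_lt hbias⟩
    · exact hp.nonneg B (Finset.mem_of_mem_filter B hB)
  have hstep := sum_stepWeight_mul (c := c) x ha p fun _ => 1
  have hhalf (m : ℝ) : (1 + m) / 2 + (1 - m) / 2 = 1 := by ring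
  simp only [mul_one, hhalf] at hstep
  have hsplit := Finset.sum_filter_add_sum_filter_not A.powerset
    (fun B => |stepBias c (signedSum x A B) (x a)| ≤ 1) p
  linarith

theorem exists_isSubgaussianWeight_signedSum (hc : 1 ≤ c) {x : ι → E} (A : Finset ι)
    (hx : ∀ i ∈ A, ‖x i‖ ≤ 1) :
    ∃ p, IsSubgaussianWeight A.powerset p (signedSum x A) c ∧
      1 - A.card * (2 * Real.exp (-c / 2)) ≤ ∑ B ∈ A.powerset, p B := by
  classical
  induction A using Finset.induction_on with
  | empty =>
    refine ⟨fun _ => 1, ⟨fun _ _ => zero_le_one, fun u => ?_⟩, by simp⟩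
    simpa [signedSum] using (by positivity : 0 ≤ c * ‖u‖ ^ 2 / 2)
  | insert a A ha ih =>
    obtain ⟨p, hp, hmass⟩ := ih fun i hi => hx i (Finset.mem_insert_of_mem hi)
    have hxa := hx a (Finset.mem_insert_self a A)
    refine ⟨_, hp.insert ha hxa hc, ?_⟩
    have := sub_two_mul_exp_le_sum_stepWeight ha hp hxa (zero_lt_one.trans_le hc)
    rw [Finset.card_insert_of_notMem ha, Nat.cast_succ]
    linarith

end SelfBalancingWalk

section ObliviousSampler

variable {α β γ Q Q' : Type*} {P : α → Prop} {good : Q → α → Prop} {δ : ℝ≥0∞}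

/-- Some distribution on the outcomes satisfying `P` is, for each fixed query `q`, `good q` except
with probability at most `δ`. The distribution is chosen before the query. -/
def HasObliviousSampler (P : α → Prop) (good : Q → α → Prop) (δ : ℝ≥0∞) : Prop :=
  ∃ μ : PMF α, (∀ a ∈ μ.support, P a) ∧ ∀ q, μ.toOuterMeasure {a | ¬ good q a} ≤ δ

theorem toOuterMeasure_le_one (μ : PMF α) (s : Set α) : μ.toOuterMeasure s ≤ 1 :=
  (μ.toOuterMeasure.mono (Set.subset_univ s)).trans_eq
    ((μ.toOuterMeasure_apply_eq_one_iff _).2 (Set.subset_univ _))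

namespace HasObliviousSampler

theorem pure {a : α} (ha : P a) (hgood : ∀ q, good q a) : HasObliviousSampler P good δ :=
  ⟨PMF.pure a, by simpa using ha, fun q => by simp [PMF.toOuterMeasure_pure_apply, hgood q]⟩

theorem mono {δ' : ℝ≥0∞} (h : HasObliviousSampler P good δ) (hδ : δ ≤ δ') :
    HasObliviousSampler P good δ' :=
  let ⟨μ, hμ, hbad⟩ := h
  ⟨μ, hμ, fun q => (hbad q).trans hδ⟩

theorem map {P' : β → Prop} {good' : Q' → β → Prop} (h : HasObliviousSampler P good δ)
    (f : α → β) (e : Q' → Q) (hP : ∀ a, P a → P' (f a))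
    (hgood : ∀ q a, P a → good (e q) a → good' q (f a)) : HasObliviousSampler P' good' δ := by
  obtain ⟨μ, hμ, hbad⟩ := h
  refine ⟨μ.map f, fun b hb => ?_, fun q => ?_⟩
  · obtain ⟨a, ha, rfl⟩ := (PMF.mem_support_map_iff _ _ _).1 hb
    exact hP a (hμ a ha)
  · rw [PMF.toOuterMeasure_map_apply]
    refine (μ.toOuterMeasure_mono ?_).trans (hbad (e q))
    rintro a ⟨hnot, ha⟩ hgood_a
    exact hnot (hgood q a (hμ a ha) hgood_a)

theorem bind {P' : α → β → Prop} {good' : Q → α → β → Prop} {P'' : γ → Prop}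
    {good'' : Q → γ → Prop} {δ' : ℝ≥0∞} (h : HasObliviousSampler P good δ)
    (h' : ∀ a, P a → HasObliviousSampler (P' a) (fun q => good' q a) δ') (f : α → β → γ)
    (hP : ∀ a b, P a → P' a b → P'' (f a b))
    (hgood : ∀ q a b, P a → P' a b → good q a → good' q a b → good'' q (f a b)) :
    HasObliviousSampler P'' good'' (δ + δ') := by
  obtain ⟨μ, hμ, hbad⟩ := h
  choose ν hν hbad' using fun a (ha : a ∈ μ.support) => h' a (hμ a ha)
  refine ⟨μ.bindOnSupport fun a ha => (ν a ha).map (f a), fun c hc => ?_, fun q => ?_⟩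
  · obtain ⟨a, ha, hc⟩ := (PMF.mem_support_bindOnSupport_iff _ _).1 hc
    obtain ⟨b, hb, rfl⟩ := (PMF.mem_support_map_iff _ _ _).1 hc
    exact hP a b (hμ a ha) (hν a ha b hb)
  have hstep (a : α) (ha : a ∈ μ.support) :
      μ a * ((ν a ha).map (f a)).toOuterMeasure {c | ¬ good'' q c}
        ≤ {a | ¬ good q a}.indicator μ a + μ a * δ' := by
    by_cases hgood_a : good q a
    · refine le_add_left (mul_le_mul_right ?_ _)
      rw [PMF.toOuterMeasure_map_apply]
      refine ((ν a ha).toOuterMeasure_mono ?_).trans (hbad' a ha q)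
      rintro b ⟨hnot, hb⟩ hgood_b
      exact hnot (hgood q a b (hμ a ha) (hν a ha b hb) hgood_a hgood_b)
    · rw [Set.indicator_of_mem (show a ∈ {a | ¬ good q a} from hgood_a)]
      exact le_add_right (mul_le_of_le_one_right' (toOuterMeasure_le_one _ _))
  calc (μ.bindOnSupport fun a ha => (ν a ha).map (f a)).toOuterMeasure {c | ¬ good'' q c}
      ≤ ∑' a, ({a | ¬ good q a}.indicator μ a + μ a * δ') := by
        rw [PMF.toOuterMeasure_bindOnSupport_apply]
        refine ENNReal.tsum_le_tsum fun a => ?_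
        split_ifs with ha
        · simp
        · exact hstep a ha
    _ = μ.toOuterMeasure {a | ¬ good q a} + δ' := by
        rw [ENNReal.tsum_add, ENNReal.tsum_mul_right, μ.tsum_coe, one_mul, PMF.toOuterMeasure_apply]
    _ ≤ δ + δ' := by gcongr; exact hbad q

theorem forall_fintype {J : Type*} [Fintype J] {good : Q × J → α → Prop}
    (h : HasObliviousSampler P good δ) :
    HasObliviousSampler P (fun q a => ∀ j, good (q, j) a) (Fintype.card J * δ) := by
  obtain ⟨μ, hμ, hbad⟩ := h
  refine ⟨μ, hμ, fun q => ?_⟩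
  calc μ.toOuterMeasure {a | ¬ ∀ j, good (q, j) a}
      = μ.toOuterMeasure (⋃ j, {a | ¬ good (q, j) a}) := by
        congr 1
        ext a
        simp
    _ ≤ ∑ j, μ.toOuterMeasure {a | ¬ good (q, j) a} := MeasureTheory.measure_iUnion_fintype_le _ _
    _ ≤ ∑ _j : J, δ := Finset.sum_le_sum fun j _ => hbad (q, j)
    _ = Fintype.card J * δ := by simp

theorem pi {κ : Type*} [Fintype κ] [Inhabited α] {P : κ → α → Prop} {good : Q → κ → α → Prop}
    (h : ∀ k, HasObliviousSampler (P k) (fun q => good q k) δ) :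
    HasObliviousSampler (fun f : κ → α => ∀ k, P k (f k)) (fun q f => ∀ k, good q k (f k))
      (Fintype.card κ * δ) := by
  classical
  suffices hfinset : ∀ s : Finset κ, HasObliviousSampler (fun f : κ → α => ∀ k ∈ s, P k (f k))
      (fun q f => ∀ k ∈ s, good q k (f k)) (s.card * δ) by
    simpa using hfinset Finset.univ
  have hupdate {s : Finset κ} {a : κ} {R : κ → α → Prop} {f : κ → α} {b : α}
      (hf : ∀ k ∈ s, R k (f k)) (hb : R a b) : ∀ k ∈ insert a s, R k (Function.update f a b k) := by
    intro k hk
    obtain rfl | hka := eq_or_ne k a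
    · simpa using hb
    · simpa [hka] using hf k (Finset.mem_of_mem_insert_of_ne hk hka)
  intro s
  induction s using Finset.induction_on with
  | empty => exact pure (a := fun _ => default) (by simp) (by simp)
  | insert a s ha ih =>
    rw [Finset.card_insert_of_notMem ha, Nat.cast_succ, add_mul, one_mul]
    exact ih.bind (fun _ _ => h a) (fun f b => Function.update f a b)
      (fun _ _ => hupdate) fun _ _ _ _ _ => hupdate

open scoped Classical in
theorem of_sum_eq_one {s : Finset α} {p : α → ℝ} {δ : ℝ} (hp : ∀ a ∈ s, 0 ≤ p a)
    (hsum : ∑ a ∈ s, p a = 1) (hbad : ∀ q, ∑ a ∈ s with ¬ good q a, p a ≤ δ) :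
    HasObliviousSampler (· ∈ s) good (ENNReal.ofReal δ) := by
  let w : α → ℝ≥0∞ := (s : Set α).indicator fun a => ENNReal.ofReal (p a)
  have hw (t : Finset α) (ht : t ⊆ s) : ∑ a ∈ t, w a = ENNReal.ofReal (∑ a ∈ t, p a) := by
    rw [ENNReal.ofReal_sum_of_nonneg fun a ha => hp a (ht ha)]
    exact Finset.sum_congr rfl fun a ha => Set.indicator_of_mem (Finset.mem_coe.2 (ht ha)) _
  let μ : PMF α := PMF.ofFinset w s (by rw [hw s subset_rfl, hsum, ENNReal.ofReal_one])
    fun a ha => Set.indicator_of_notMem (mt Finset.mem_coe.1 ha) _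
  have hμ {a : α} (ha : a ∈ μ.support) : a ∈ s := ((PMF.mem_support_ofFinset_iff _ _ a).1 ha).1
  refine ⟨μ, fun a => hμ, fun q => ?_⟩
  calc μ.toOuterMeasure {a | ¬ good q a}
      ≤ μ.toOuterMeasure (s.filter fun a => ¬ good q a) :=
        μ.toOuterMeasure_mono fun a ⟨hnot, ha⟩ => by simpa using ⟨hμ ha, hnot⟩
    _ = ENNReal.ofReal (∑ a ∈ s with ¬ good q a, p a) := by
        rw [PMF.toOuterMeasure_apply_finset]
        exact hw _ (Finset.filter_subset _ _)
    _ ≤ ENNReal.ofReal δ := ENNReal.ofReal_le_ofReal (hbad q)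

open scoped Classical in
theorem of_sum_le_one {s : Finset α} {p : α → ℝ} {δ : ℝ} {a₀ : α} (ha₀ : a₀ ∈ s)
    (hp : ∀ a ∈ s, 0 ≤ p a) (hsum : ∑ a ∈ s, p a ≤ 1)
    (hbad : ∀ q, ∑ a ∈ s with ¬ good q a, p a + (1 - ∑ a ∈ s, p a) ≤ δ) :
    HasObliviousSampler (· ∈ s) good (ENNReal.ofReal δ) := by
  set missing := 1 - ∑ a ∈ s, p a
  have hmissing : 0 ≤ missing := sub_nonneg.2 hsum
  refine of_sum_eq_one (p := fun a => p a + if a = a₀ then missing else 0) (fun a ha => ?_) ?_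
    fun q => ?_
  · exact add_nonneg (hp a ha) (by split_ifs <;> simp [hmissing])
  · simp [Finset.sum_add_distrib, ha₀, missing]
  · rw [Finset.sum_add_distrib, Finset.sum_ite_eq']
    refine le_trans ?_ (hbad q)
    gcongr
    split_ifs <;> simp [hmissing]

theorem exists_pmf_one_sub_le {δ : ℝ} (h : HasObliviousSampler P good (ENNReal.ofReal δ))
    (hδ : 0 ≤ δ) :
    ∃ μ : PMF α, (∀ a ∈ μ.support, P a) ∧
      ∀ q, ENNReal.ofReal (1 - δ) ≤ μ.toOuterMeasure {a | good q a} := by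
  obtain ⟨μ, hμ, hbad⟩ := h
  refine ⟨μ, hμ, fun q => ?_⟩
  rw [ENNReal.ofReal_sub _ hδ, ENNReal.ofReal_one, tsub_le_iff_right]
  calc 1 = μ.toOuterMeasure ({a | good q a} ∪ {a | ¬ good q a}) :=
        ((μ.toOuterMeasure_apply_eq_one_iff _).2 fun a _ => em (good q a)).symm
    _ ≤ μ.toOuterMeasure {a | good q a} + μ.toOuterMeasure {a | ¬ good q a} :=
        MeasureTheory.measure_union_le _ _
    _ ≤ μ.toOuterMeasure {a | good q a} + ENNReal.ofReal δ := by gcongr; exact hbad q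

end HasObliviousSampler

end ObliviousSampler

section Halving

theorem signedSum_sdiff {ι E : Type*} [DecidableEq ι] [AddCommGroup E] (x : ι → E)
    {A B : Finset ι} (hB : B ⊆ A) : signedSum x A (A \ B) = -signedSum x A B := by
  rw [signedSum, signedSum, ← Finset.sum_sdiff hB]
  abel

theorem signedSum_smul {ι E : Type*} [AddCommGroup E] [Module ℝ E] (ρ : ℝ) (x : ι → E)
    (A B : Finset ι) : signedSum (fun i => ρ • x i) A B = ρ • signedSum x A B := by
  simp only [signedSum, ← Finset.smul_sum, smul_sub]
  rw [smul_comm]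

variable {ι E : Type*} [NormedAddCommGroup E] [InnerProductSpace ℝ E] {c : ℝ}

/-- Bound on the failure probability of one halving of at most `N` vectors, for a fixed query and
at deviation `c`. -/
noncomputable def halvingFailure (N : ℕ) (c : ℝ) : ℝ≥0∞ :=
  ENNReal.ofReal (2 * (N + 1) * Real.exp (-c / 2))

theorem halvingFailure_mono {N N' : ℕ} (h : N ≤ N') : halvingFailure N c ≤ halvingFailure N' c := by
  unfold halvingFailure
  gcongr

theorem hasObliviousSampler_subset (hc : 1 ≤ c) {x : ι → E} {A : Finset ι}
    (hx : ∀ i ∈ A, ‖x i‖ ≤ 1) :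
    HasObliviousSampler (· ∈ A.powerset)
      (fun u B => |⟪signedSum x A B, u⟫| ≤ c * ‖u‖) (halvingFailure A.card c) := by
  obtain ⟨p, hp, hmass⟩ := exists_isSubgaussianWeight_signedSum hc A hx
  refine .of_sum_le_one (Finset.empty_mem_powerset A) hp.nonneg hp.sum_le_one fun u => ?_
  have htail := hp.sum_filter_lt_abs_inner_le (zero_le_one.trans hc) u
  simp only [← not_le] at htail
  refine (add_le_add htail (sub_le_comm.1 hmass)).trans_eq ?_
  ring

theorem hasObliviousSampler_halve (hc : 1 ≤ c) {x : ι → E} {A : Finset ι} {ρ : ℝ}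
    (hρ : 0 ≤ ρ) (hx : ∀ i ∈ A, ‖x i‖ ≤ ρ) :
    HasObliviousSampler (fun B => B ⊆ A ∧ 2 * B.card ≤ A.card)
      (fun u B => |⟪signedSum x A B, u⟫| ≤ c * ρ * ‖u‖) (halvingFailure A.card c) := by
  classical
  have hunit : ∀ i ∈ A, ‖ρ⁻¹ • x i‖ ≤ 1 := fun i hi => by
    rw [norm_smul, norm_inv, Real.norm_of_nonneg hρ]
    exact inv_mul_le_one_of_le₀ (hx i hi) hρ
  have hscale (B : Finset ι) (hB : B ⊆ A) :
      signedSum x A B = ρ • signedSum (fun i => ρ⁻¹ • x i) A B := by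
    have hxi : ∀ i ∈ A, x i = ρ • ρ⁻¹ • x i := fun i hi => by
      obtain rfl | hρ₀ := eq_or_ne ρ 0
      · simpa using hx i hi
      · rw [smul_inv_smul₀ hρ₀]
    rw [← signedSum_smul, signedSum, signedSum, Finset.sum_congr rfl hxi,
      Finset.sum_congr rfl fun i hi => hxi i (hB hi)]
  refine (hasObliviousSampler_subset hc hunit).map
    (fun B => if 2 * B.card ≤ A.card then B else A \ B) id (fun B hB => ?_) fun u B hB hgood => ?_
  · rw [Finset.mem_powerset] at hB
    have := Finset.card_sdiff_add_card_eq_card hB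
    split_ifs with hcard
    · exact ⟨hB, hcard⟩
    · exact ⟨Finset.sdiff_subset, by lia⟩
  · rw [Finset.mem_powerset] at hB
    have hbound : |⟪signedSum x A B, u⟫| ≤ c * ρ * ‖u‖ := by
      rw [hscale B hB, real_inner_smul_left, abs_mul, abs_of_nonneg hρ, mul_comm c, mul_assoc]
      exact mul_le_mul_of_nonneg_left hgood hρ
    split_ifs with hcard
    · exact hbound
    · rwa [signedSum_sdiff x hB, inner_neg_left, abs_neg]

theorem hasObliviousSampler_halve_iterate (hc : 1 ≤ c) {x : ι → E} {A : Finset ι} {ρ : ℝ}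
    (hρ : 0 ≤ ρ) (hx : ∀ i ∈ A, ‖x i‖ ≤ ρ) (L : ℕ) :
    HasObliviousSampler (fun B => B ⊆ A ∧ 2 ^ L * B.card ≤ A.card)
      (fun u B => |⟪(2 : ℝ) ^ L • ∑ i ∈ B, x i - ∑ i ∈ A, x i, u⟫| ≤ 2 ^ L * (c * ρ * ‖u‖))
      (L * halvingFailure A.card c) := by
  induction L with
  | zero =>
    refine .pure (a := A) (by simp) fun u => ?_
    simp only [pow_zero, one_smul, sub_self, inner_zero_left, abs_zero, one_mul]
    positivity
  | succ L ih =>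
    rw [Nat.cast_succ, add_mul, one_mul]
    refine ih.bind (fun B hB => (hasObliviousSampler_halve hc hρ fun i hi => hx i (hB.1 hi)).mono
      (halvingFailure_mono (Finset.card_le_card hB.1))) (fun _ B' => B') ?_ ?_
    · rintro B B' ⟨hBA, hcard⟩ ⟨hB'B, hcard'⟩
      refine ⟨hB'B.trans hBA, ?_⟩
      calc 2 ^ (L + 1) * B'.card = 2 ^ L * (2 * B'.card) := by ring
        _ ≤ 2 ^ L * B.card := by gcongr
        _ ≤ A.card := hcard
    · intro u B B' _ _ herr herr'
      have hsplit : (2 : ℝ) ^ (L + 1) • ∑ i ∈ B', x i - ∑ i ∈ A, x i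
          = (2 : ℝ) ^ L • signedSum x B B' + ((2 : ℝ) ^ L • ∑ i ∈ B, x i - ∑ i ∈ A, x i) := by
        rw [signedSum]
        module
      rw [hsplit, inner_add_left, real_inner_smul_left]
      calc _ ≤ 2 ^ L * |⟪signedSum x B B', u⟫|
            + |⟪(2 : ℝ) ^ L • ∑ i ∈ B, x i - ∑ i ∈ A, x i, u⟫| := by
            refine (abs_add_le _ _).trans_eq ?_
            rw [abs_mul, abs_of_pos (by positivity : (0 : ℝ) < 2 ^ L)]
        _ ≤ 2 ^ L * (c * ρ * ‖u‖) + 2 ^ L * (c * ρ * ‖u‖) := by gcongr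
        _ = 2 ^ (L + 1) * (c * ρ * ‖u‖) := by ring

end Halving

section VectorHalving

variable {ι F H : Type*} [NormedAddCommGroup F] [InnerProductSpace ℝ F] [NormedAddCommGroup H]
  [InnerProductSpace ℝ H]

theorem norm_le_sqrt_card_mul {J : Type*} [Fintype J] (b : OrthonormalBasis J ℝ F) {w : F} {β : ℝ}
    (hβ : 0 ≤ β) (hw : ∀ j, |⟪b j, w⟫| ≤ β) : ‖w‖ ≤ √(Fintype.card J) * β := by
  refine le_of_sq_le_sq ?_ (by positivity)
  calc ‖w‖ ^ 2 = ∑ j, ⟪b j, w⟫ ^ 2 := by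
        simpa using (b.sum_sq_norm_inner_right w).symm
    _ ≤ ∑ _j : J, β ^ 2 :=
        Finset.sum_le_sum fun j _ => sq_le_sq' (abs_le.1 (hw j)).1 (abs_le.1 (hw j)).2
    _ = (√(Fintype.card J) * β) ^ 2 := by
        rw [mul_pow, Real.sq_sqrt (Nat.cast_nonneg _)]
        simp

open TensorProduct in
theorem hasObliviousSampler_halve_vector [Finite ι] {c : ℝ} (hc : 1 ≤ c) {v : ι → F} {y : ι → H}
    {A : Finset ι} {M R : ℝ} (hM : 0 ≤ M) (hR : 0 ≤ R) (hv : ∀ i ∈ A, ‖v i‖ ≤ M)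
    (hy : ∀ i ∈ A, ‖y i‖ ≤ R) (L : ℕ) :
    HasObliviousSampler (fun B => B ⊆ A ∧ 2 ^ L * B.card ≤ A.card)
      (fun u B => ‖(2 : ℝ) ^ L • ∑ i ∈ B, ⟪y i, u⟫ • v i - ∑ i ∈ A, ⟪y i, u⟫ • v i‖
        ≤ √(Set.finrank ℝ (Set.range v)) * (2 ^ L * (c * (M * R) * ‖u‖)))
      (Set.finrank ℝ (Set.range v) * (L * halvingFailure A.card c)) := by
  set V := Submodule.span ℝ (Set.range v)
  have : FiniteDimensional ℝ V := FiniteDimensional.span_of_finite ℝ (Set.finite_range v)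
  let b := stdOrthonormalBasis ℝ V
  have hx : ∀ i ∈ A, ‖v i ⊗ₜ[ℝ] y i‖ ≤ M * R := fun i hi => by
    rw [TensorProduct.norm_tmul]
    exact mul_le_mul (hv i hi) (hy i hi) (norm_nonneg _) hM
  have hcard : Set.finrank ℝ (Set.range v) = Fintype.card (Fin (Module.finrank ℝ V)) := by
    rw [Fintype.card_fin]
    rfl
  rw [hcard]
  have hinner (C : Finset ι) (u : H) (e : F) :
      ⟪∑ i ∈ C, v i ⊗ₜ[ℝ] y i, e ⊗ₜ[ℝ] u⟫ = ⟪e, ∑ i ∈ C, ⟪y i, u⟫ • v i⟫ := by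
    simp only [sum_inner, inner_sum, TensorProduct.inner_tmul, real_inner_smul_right,
      real_inner_comm, mul_comm]
  have hcoord : HasObliviousSampler (fun B => B ⊆ A ∧ 2 ^ L * B.card ≤ A.card)
      (fun (q : H × Fin (Module.finrank ℝ V)) B =>
        |⟪(b q.2 : F), (2 : ℝ) ^ L • ∑ i ∈ B, ⟪y i, q.1⟫ • v i - ∑ i ∈ A, ⟪y i, q.1⟫ • v i⟫|
          ≤ 2 ^ L * (c * (M * R) * ‖q.1‖))
      (L * halvingFailure A.card c) := by
    refine (hasObliviousSampler_halve_iterate hc (mul_nonneg hM hR) hx L).map id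
      (fun q => (b q.2 : F) ⊗ₜ[ℝ] q.1) (fun _ => id) fun q B _ hgood => ?_
    rw [TensorProduct.norm_tmul, Submodule.norm_coe, b.norm_eq_one, one_mul, inner_sub_left,
      real_inner_smul_left, hinner, hinner] at hgood
    rwa [inner_sub_right, real_inner_smul_right]
  refine hcoord.forall_fintype.map id id (fun _ => id) fun u B _ hgood => ?_
  have hspan (C : Finset ι) : ∑ i ∈ C, ⟪y i, u⟫ • v i ∈ V :=
    V.sum_mem fun i _ => V.smul_mem _ (Submodule.subset_span (Set.mem_range_self i))
  exact norm_le_sqrt_card_mul b (w := ⟨_, V.sub_mem (V.smul_mem _ (hspan B)) (hspan A)⟩)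
    (by positivity) hgood

end VectorHalving

section Levels

variable {ι E : Type*} {T : ℕ} {κ τ : ℝ}

/-- The estimator `∑ l, 2 ^ l • ∑ i ∈ S l, f i` of `∑ i, f i` from the sets `S l` retained at the
levels `l = 0, …, T`. -/
def levelSum [AddCommGroup E] [Module ℝ E] (S : Fin (T + 1) → Finset ι) (f : ι → E) : E :=
  ∑ l : Fin (T + 1), (2 : ℝ) ^ (l : ℕ) • ∑ i ∈ S l, f i

theorem norm_levelSum_sub_sum_le [Fintype ι] [SeminormedAddCommGroup E] [NormedSpace ℝ E]
    {S : Fin (T + 1) → Finset ι} {f : ι → E} (level : ι → Fin (T + 1)) {β : ℝ}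
    (h : ∀ l : Fin (T + 1),
      ‖(2 : ℝ) ^ (l : ℕ) • ∑ i ∈ S l, f i - ∑ i with level i = l, f i‖ ≤ β) :
    ‖levelSum S f - ∑ i, f i‖ ≤ (T + 1) * β := by
  rw [levelSum, ← Finset.sum_fiberwise Finset.univ level, ← Finset.sum_sub_distrib]
  calc _ ≤ ∑ _l : Fin (T + 1), β := norm_sum_le_of_le _ fun l _ => h l
    _ = (T + 1) * β := by simp

/-- The Frobenius norm of the matrix with rows `v i`. -/
noncomputable def frobeniusNorm [Norm E] [Fintype ι] (v : ι → E) : ℝ :=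
  √(∑ i, ‖v i‖ ^ 2)

theorem frobeniusNorm_nonneg [Norm E] [Fintype ι] (v : ι → E) : 0 ≤ frobeniusNorm v :=
  Real.sqrt_nonneg _

theorem frobeniusNorm_sq [Norm E] [Fintype ι] (v : ι → E) :
    frobeniusNorm v ^ 2 = ∑ i, ‖v i‖ ^ 2 :=
  Real.sq_sqrt (Finset.sum_nonneg fun _ _ => sq_nonneg _)

theorem card_mul_sq_le_of_mul_frobeniusNorm_lt [SeminormedAddCommGroup E] [Fintype ι]
    {v : ι → E} {C : Finset ι} {a : ℝ} (hκ : 0 ≤ κ)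
    (hC : ∀ i ∈ C, κ * frobeniusNorm v < a * ‖v i‖) : C.card * κ ^ 2 ≤ a ^ 2 := by
  obtain hF | hF := (frobeniusNorm_nonneg v).eq_or_lt
  · have hv (i) : ‖v i‖ = 0 := by
      have hsq := frobeniusNorm_sq v
      rw [← hF, zero_pow two_ne_zero, eq_comm,
        Finset.sum_eq_zero_iff_of_nonneg fun _ _ => sq_nonneg _] at hsq
      exact pow_eq_zero_iff two_ne_zero |>.1 (hsq i (Finset.mem_univ i))
    have : C = ∅ := Finset.eq_empty_of_forall_notMem fun i hi => by simpa [hv, ← hF] using hC i hi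
    simp [this, sq_nonneg]
  · refine le_of_mul_le_mul_right ?_ (pow_pos hF 2)
    calc C.card * κ ^ 2 * frobeniusNorm v ^ 2 = ∑ _i ∈ C, (κ * frobeniusNorm v) ^ 2 := by
          simp [mul_pow, mul_assoc]
      _ ≤ ∑ i ∈ C, (a * ‖v i‖) ^ 2 :=
          Finset.sum_le_sum fun i hi => pow_le_pow_left₀ (by positivity) (hC i hi).le 2
      _ ≤ ∑ i, (a * ‖v i‖) ^ 2 :=
          Finset.sum_le_sum_of_subset_of_nonneg (Finset.subset_univ _) fun _ _ _ => sq_nonneg _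
      _ = a ^ 2 * frobeniusNorm v ^ 2 := by
          simp only [frobeniusNorm_sq, Finset.mul_sum, mul_pow]

/-- The level at which a vector `w` is sampled: the largest `l ≤ T` with `2 ^ l * ‖w‖ ≤ τ`, and
level `0`, which is kept exactly, if there is none. -/
noncomputable def sampleLevel [Norm E] (T : ℕ) (τ : ℝ) (w : E) : Fin (T + 1) :=
  open scoped Classical in
  ⟨Nat.findGreatest (fun l => 2 ^ l * ‖w‖ ≤ τ) T, Nat.lt_succ_of_le (Nat.findGreatest_le T)⟩

theorem two_pow_sampleLevel_mul_norm_le [Norm E] {w : E}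
    (h : (sampleLevel T τ w : ℕ) ≠ 0) : 2 ^ (sampleLevel T τ w : ℕ) * ‖w‖ ≤ τ := by
  classical exact Nat.findGreatest_of_ne_zero (P := fun l => 2 ^ l * ‖w‖ ≤ τ) rfl h

theorem lt_two_pow_sampleLevel_succ_mul_norm [Norm E] {w : E}
    (h : (sampleLevel T τ w : ℕ) < T) : τ < 2 ^ ((sampleLevel T τ w : ℕ) + 1) * ‖w‖ := by
  classical exact not_le.1 (Nat.findGreatest_is_greatest (P := fun l => 2 ^ l * ‖w‖ ≤ τ)
    (Nat.lt_succ_self _) h)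

theorem card_le_of_lt_last [SeminormedAddCommGroup E] [Fintype ι] {v : ι → E} (hκ : 0 < κ)
    {B : Finset ι} {l : Fin (T + 1)} (hl : (l : ℕ) < T)
    (hB : 2 ^ (l : ℕ) * B.card ≤ #{i | sampleLevel T (κ * frobeniusNorm v) (v i) = l}) :
    (B.card : ℝ) ≤ 2 * √(Fintype.card ι) / κ := by
  set C : Finset ι := {i | sampleLevel T (κ * frobeniusNorm v) (v i) = l}
  have hC : C.card * κ ^ 2 ≤ (2 ^ ((l : ℕ) + 1)) ^ 2 :=
    card_mul_sq_le_of_mul_frobeniusNorm_lt (v := v) hκ.le fun i hi => by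
      obtain rfl := (Finset.mem_filter.1 hi).2
      exact lt_two_pow_sampleLevel_succ_mul_norm hl
  have hCn : (C.card : ℝ) ≤ Fintype.card ι := by exact_mod_cast C.card_le_univ
  have hB' : (2 : ℝ) ^ (l : ℕ) * B.card ≤ C.card := by exact_mod_cast hB
  rw [le_div_iff₀ hκ]
  refine le_of_mul_le_mul_left (le_of_sq_le_sq ?_ (by positivity)) (pow_pos two_pos (l : ℕ))
  calc ((2 : ℝ) ^ (l : ℕ) * (B.card * κ)) ^ 2 = (2 ^ (l : ℕ) * B.card) ^ 2 * κ ^ 2 := by ring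
    _ ≤ (C.card : ℝ) ^ 2 * κ ^ 2 := by gcongr
    _ = C.card * (C.card * κ ^ 2) := by ring
    _ ≤ Fintype.card ι * (2 ^ ((l : ℕ) + 1)) ^ 2 := by gcongr
    _ = (2 ^ (l : ℕ) * (2 * √(Fintype.card ι))) ^ 2 := by
        rw [mul_pow, mul_pow, Real.sq_sqrt (Nat.cast_nonneg _)]
        ring

theorem sum_card_le [SeminormedAddCommGroup E] [Fintype ι] {v : ι → E} (hκ : 0 < κ)
    (hT : Fintype.card ι ≤ 2 ^ T) {S : Fin (T + 1) → Finset ι}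
    (hS : ∀ l : Fin (T + 1),
      2 ^ (l : ℕ) * (S l).card ≤ #{i | sampleLevel T (κ * frobeniusNorm v) (v i) = l}) :
    ∑ l, ((S l).card : ℝ) ≤ 2 * T * √(Fintype.card ι) / κ + 1 := by
  have hlast : (S (Fin.last T)).card ≤ 1 := by
    refine Nat.le_of_mul_le_mul_left ?_ (Nat.two_pow_pos T)
    rw [mul_one]
    exact (hS (Fin.last T)).trans ((Finset.card_le_univ _).trans hT)
  rw [Fin.sum_univ_castSucc]
  gcongr
  · calc ∑ l : Fin T, ((S l.castSucc).card : ℝ)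
        ≤ ∑ _l : Fin T, 2 * √(Fintype.card ι) / κ :=
          Finset.sum_le_sum fun l _ => card_le_of_lt_last hκ l.is_lt (hS l.castSucc)
      _ = 2 * T * √(Fintype.card ι) / κ := by
          rw [Finset.sum_const, Finset.card_univ, Fintype.card_fin, nsmul_eq_mul]
          ring
  · exact_mod_cast hlast

variable {F H : Type*} [NormedAddCommGroup F] [InnerProductSpace ℝ F] [NormedAddCommGroup H]
  [InnerProductSpace ℝ H]

theorem hasObliviousSampler_level [Finite ι] {c R : ℝ} (hc : 1 ≤ c) (hτ : 0 ≤ τ) (hR : 0 ≤ R)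
    {v : ι → F} {y : ι → H} {A : Finset ι} (hy : ∀ i ∈ A, ‖y i‖ ≤ R) (l : ℕ)
    (hv : ∀ i ∈ A, l ≠ 0 → 2 ^ l * ‖v i‖ ≤ τ) :
    HasObliviousSampler (fun B => 2 ^ l * B.card ≤ A.card)
      (fun u B => ‖(2 : ℝ) ^ l • ∑ i ∈ B, ⟪y i, u⟫ • v i - ∑ i ∈ A, ⟪y i, u⟫ • v i‖
        ≤ √(Set.finrank ℝ (Set.range v)) * (c * (τ * R) * ‖u‖))
      (Set.finrank ℝ (Set.range v) * (l * halvingFailure A.card c)) := by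
  obtain rfl | hl := eq_or_ne l 0
  · refine .pure (a := A) (by simp) fun u => ?_
    simp only [pow_zero, one_smul, sub_self, norm_zero]
    positivity
  have hvM : ∀ i ∈ A, ‖v i‖ ≤ τ / 2 ^ l := fun i hi => by
    rw [le_div_iff₀' (by positivity)]
    exact hv i hi hl
  refine (hasObliviousSampler_halve_vector hc (by positivity) hR hvM hy l).map id id
    (fun _ hB => hB.2) fun u B _ hgood => hgood.trans_eq ?_
  rw [id]
  field_simp

theorem hasObliviousSampler_levels [Fintype ι] {c R : ℝ} (hc : 1 ≤ c) (hκ : 0 < κ) (hR : 0 ≤ R)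
    (v : ι → F) {y : ι → H} (hy : ∀ i, ‖y i‖ ≤ R) (hT : Fintype.card ι ≤ 2 ^ T) :
    HasObliviousSampler
      (fun S : Fin (T + 1) → Finset ι => ∑ l, ((S l).card : ℝ) ≤ 2 * T * √(Fintype.card ι) / κ + 1)
      (fun u S => ‖levelSum S (fun i => ⟪y i, u⟫ • v i) - ∑ i, ⟪y i, u⟫ • v i‖
        ≤ (T + 1) * (√(Set.finrank ℝ (Set.range v)) * (c * (κ * frobeniusNorm v * R) * ‖u‖)))
      ((T + 1 : ℕ) * (Set.finrank ℝ (Set.range v) * (T * halvingFailure (Fintype.card ι) c))) := by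
  let τ := κ * frobeniusNorm v
  have hlevel (l : Fin (T + 1)) := (hasObliviousSampler_level hc
    (mul_nonneg hκ.le (frobeniusNorm_nonneg v)) hR (v := v) (y := y)
    (A := {i | sampleLevel T τ (v i) = l})
    (fun i _ => hy i) l fun i hi hl => by
      obtain rfl := (Finset.mem_filter.1 hi).2
      exact two_pow_sampleLevel_mul_norm_le hl).mono (δ' := Set.finrank ℝ (Set.range v) *
        (T * halvingFailure (Fintype.card ι) c)) (by
      gcongr
      · exact l.is_le
      · exact halvingFailure_mono (Finset.card_le_univ _))
  have hpi := HasObliviousSampler.pi hlevel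
  rw [Fintype.card_fin] at hpi
  exact hpi.map id id (fun S hS => sum_card_le (v := v) hκ hT hS) fun u S _ hgood =>
    norm_levelSum_sub_sum_le _ hgood

end Levels

section WeightedSum

theorem one_le_log_two_add {n : ℕ} (hn : 0 < n) : 1 ≤ Real.log (2 + n) := by
  have : (1 : ℝ) ≤ n := by exact_mod_cast hn
  rw [Real.le_log_iff_exp_le (by positivity)]
  linarith [Real.exp_one_lt_three]

theorem clog_add_one_le_log {n : ℕ} (hn : 0 < n) :
    (Nat.clog 2 n : ℝ) + 1 ≤ 3 * Real.log (2 + n) := by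
  have hn' : (1 : ℝ) ≤ n := by exact_mod_cast hn
  have hlog2 := Real.log_two_gt_d9
  have hclog : (Nat.clog 2 n : ℝ) < Real.log n / Real.log 2 + 1 := by
    rw [← Real.natCeil_logb_natCast]
    exact Nat.ceil_lt_add_one (Real.logb_nonneg one_lt_two (by exact_mod_cast hn'))
  have hlog : 2 * Real.log 2 + Real.log n ≤ 2 * Real.log (2 + n) := by
    calc 2 * Real.log 2 + Real.log n = Real.log (2 ^ 2 * n) := by
          rw [Real.log_mul (by norm_num) (by positivity), Real.log_pow, Nat.cast_two]
      _ ≤ Real.log ((2 + n) ^ 2) := Real.log_le_log (by positivity) (by nlinarith)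
      _ = 2 * Real.log (2 + n) := by rw [Real.log_pow, Nat.cast_two]
  calc (Nat.clog 2 n : ℝ) + 1 ≤ Real.log n / Real.log 2 + 1 + 1 := by gcongr
    _ = (2 * Real.log 2 + Real.log n) / Real.log 2 := by field_simp; ring
    _ ≤ 2 * Real.log (2 + n) / Real.log 2 := by gcongr
    _ ≤ 3 * Real.log (2 + n) := by
        rw [div_le_iff₀ (by positivity)]
        nlinarith [one_le_log_two_add hn]

theorem levels_failure_le {n T D : ℕ} (hT : T ≤ n) (hD : D ≤ n) :
    (T + 1 : ℕ) * (D * (T * halvingFailure n (16 * Real.log (2 + n))))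
      ≤ ENNReal.ofReal (1 / (2 + n) ^ 2 / 2) := by
  have hexp : Real.exp (-(16 * Real.log (2 + n)) / 2) = 1 / (2 + n : ℝ) ^ 8 := by
    rw [one_div, ← Real.exp_log (by positivity : (0 : ℝ) < (2 + n) ^ 8), ← Real.exp_neg,
      Real.log_pow]
    congr 1
    push_cast
    ring
  rw [halvingFailure, hexp]
  simp only [← ENNReal.ofReal_natCast]
  rw [← ENNReal.ofReal_mul (by positivity), ← ENNReal.ofReal_mul (by positivity),
    ← ENNReal.ofReal_mul (by positivity)]
  refine ENNReal.ofReal_le_ofReal ?_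
  have hT' : (T : ℝ) ≤ 2 + n := by exact_mod_cast (by lia : T ≤ 2 + n)
  have hT'' : ((T + 1 : ℕ) : ℝ) ≤ 2 + n := by exact_mod_cast (by lia : T + 1 ≤ 2 + n)
  have hD' : (D : ℝ) ≤ 2 + n := by exact_mod_cast (by lia : D ≤ 2 + n)
  have hn : (n : ℝ) + 1 ≤ 2 + n := by linarith
  calc _ ≤ (2 + n : ℝ) * ((2 + n) * ((2 + n) * (2 * (2 + n) * (1 / (2 + n) ^ 8)))) := by gcongr
    _ = 1 / (2 + n) ^ 2 * (2 / (2 + n) ^ 2) := by field_simp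
    _ ≤ 1 / (2 + n) ^ 2 * (1 / 2) := by
        gcongr 1 / (2 + (n : ℝ)) ^ 2 * ?_
        rw [div_le_div_iff₀ (by positivity) two_pos]
        nlinarith [n.cast_nonneg (α := ℝ)]
    _ = 1 / (2 + n) ^ 2 / 2 := mul_one_div _ _

theorem levels_size_le {T ℓ X : ℝ} (hT : 0 ≤ T) (hTℓ : T + 1 ≤ 3 * ℓ) (hℓ : 1 ≤ ℓ) (hX : 1 ≤ X) :
    96 * X * (T * (T + 1) * ℓ) + 1 ≤ 865 * X * ℓ ^ 4 := by
  have hone : 1 ≤ X * ℓ ^ 4 := one_le_mul_of_one_le_of_one_le hX (one_le_pow₀ hℓ)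
  have hlog : T * (T + 1) * ℓ ≤ 9 * ℓ ^ 4 := by
    calc T * (T + 1) * ℓ ≤ 3 * ℓ * (3 * ℓ) * ℓ := by
          gcongr
          linarith
      _ = 9 * ℓ ^ 3 := by ring
      _ ≤ 9 * ℓ ^ 4 := by
          gcongr 9 * ?_
          exact pow_le_pow_right₀ hℓ (by norm_num)
  calc 96 * X * (T * (T + 1) * ℓ) + 1 ≤ 96 * X * (9 * ℓ ^ 4) + X * ℓ ^ 4 := by gcongr
    _ = 865 * X * ℓ ^ 4 := by ring

variable {ι F H : Type*} [Fintype ι] [Nonempty ι] [NormedAddCommGroup F] [InnerProductSpace ℝ F]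
  [NormedAddCommGroup H] [InnerProductSpace ℝ H] {T d : ℕ} {R m ε : ℝ}

theorem hasObliviousSampler_weightedSum (hT : T = Nat.clog 2 (Fintype.card ι)) (hd : 0 < d)
    (hR : 0 < R) (hm : 0 < m) (hmR : m ≤ R ^ 2) (hε : 0 < ε) (hε₁ : ε ≤ 1) (v : ι → F)
    (hvd : Set.finrank ℝ (Set.range v) ≤ d) {y : ι → H} (hy : ∀ i, ‖y i‖ ≤ R) :
    HasObliviousSampler
      (fun S : Fin (T + 1) → Finset ι => ∑ l, ((S l).card : ℝ)
        ≤ 865 * √d * (R ^ 2 / m) * ε⁻¹ * Real.log (2 + Fintype.card ι) ^ 4)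
      (fun u S => ‖u‖ ≤ R → ‖levelSum S (fun i => ⟪y i, u⟫ • v i) - ∑ i, ⟪y i, u⟫ • v i‖
        ≤ ε / 3 * (√(Fintype.card ι) * m * frobeniusNorm v))
      (ENNReal.ofReal (1 / (2 + Fintype.card ι) ^ 2 / 2)) := by
  subst hT
  set n := Fintype.card ι
  have hn : 0 < n := Fintype.card_pos
  set T := Nat.clog 2 n
  set ℓ := Real.log (2 + n)
  have hℓ : 1 ≤ ℓ := one_le_log_two_add hn
  have hTℓ : (T : ℝ) + 1 ≤ 3 * ℓ := clog_add_one_le_log hn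
  have hd' : 1 ≤ √d := Real.one_le_sqrt.2 (by exact_mod_cast hd)
  set κ := ε * √n * m / (3 * (T + 1) * √d * (16 * ℓ) * R ^ 2) with hκ
  have hfailure := levels_failure_le (Nat.clog_le_of_le_pow (Nat.lt_two_pow_self (n := n)).le)
    (finrank_range_le_card (R := ℝ) v)
  have hlevels := (hasObliviousSampler_levels (c := 16 * ℓ) (κ := κ) (by linarith) (by positivity)
    hR.le v hy (Nat.le_pow_clog one_lt_two n)).mono hfailure
  refine hlevels.map id id (fun S hS => hS.trans ?_) fun u S _ hgood hu => hgood.trans ?_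
  · have hX : 1 ≤ √d * (R ^ 2 / m) * ε⁻¹ :=
      one_le_mul_of_one_le_of_one_le (one_le_mul_of_one_le_of_one_le hd' ((one_le_div hm).2 hmR))
        ((one_le_inv₀ hε).2 hε₁)
    calc 2 * T * √n / κ + 1 = 96 * (√d * (R ^ 2 / m) * ε⁻¹) * (T * (T + 1) * ℓ) + 1 := by
          rw [hκ]
          field_simp
          ring
      _ ≤ 865 * (√d * (R ^ 2 / m) * ε⁻¹) * ℓ ^ 4 := levels_size_le T.cast_nonneg hTℓ hℓ hX
      _ = 865 * √d * (R ^ 2 / m) * ε⁻¹ * ℓ ^ 4 := by ring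
  · have := frobeniusNorm_nonneg v
    calc (T + 1) * (√(Set.finrank ℝ (Set.range v)) * (16 * ℓ * (κ * frobeniusNorm v * R) * ‖u‖))
        ≤ (T + 1) * (√d * (16 * ℓ * (κ * frobeniusNorm v * R) * R)) := by gcongr
      _ = ε / 3 * (√n * m * frobeniusNorm v) := by
          rw [hκ]
          field_simp

end WeightedSum

section Attention

theorem norm_ratio_sub_ratio_le {F : Type*} [SeminormedAddCommGroup F] [NormedSpace ℝ F]
    {N N' : F} {Z Z' W ε : ℝ} (hZ : 0 < Z) (hε : 0 ≤ ε) (hε₁ : ε ≤ 1) (hN : ‖N‖ ≤ W)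
    (hN' : ‖N' - N‖ ≤ ε / 3 * W) (hZ' : |Z' - Z| ≤ ε / 3 * Z) :
    ‖Z'⁻¹ • N' - Z⁻¹ • N‖ ≤ ε * (W / Z) := by
  have hW : 0 ≤ W := (norm_nonneg N).trans hN
  have hZ_le : 2 / 3 * Z ≤ Z' := by nlinarith [(abs_le.1 hZ').1]
  have hZ'_pos : 0 < Z' := by linarith
  have hsplit : Z'⁻¹ • N' - Z⁻¹ • N = Z'⁻¹ • ((N' - N) - ((Z' - Z) / Z) • N) := by
    rw [smul_sub, smul_sub, smul_smul, sub_sub, ← add_smul]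
    congr 2
    field_simp
    ring
  have hden : ‖((Z' - Z) / Z) • N‖ ≤ ε / 3 * W := by
    rw [norm_smul, norm_div, Real.norm_eq_abs, Real.norm_of_nonneg hZ.le]
    exact mul_le_mul ((div_le_iff₀ hZ).2 hZ') hN (norm_nonneg N) (by positivity)
  rw [hsplit, norm_smul, norm_inv, Real.norm_of_nonneg hZ'_pos.le, inv_mul_le_iff₀ hZ'_pos]
  calc ‖(N' - N) - ((Z' - Z) / Z) • N‖ ≤ ε / 3 * W + ε / 3 * W := norm_sub_le_of_le hN' hden
    _ = ε * (2 / 3 * Z * (W / Z)) := by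
        field_simp
        ring
    _ ≤ ε * (Z' * (W / Z)) := by gcongr
    _ = Z' * (ε * (W / Z)) := by ring

theorem norm_sum_smul_le_sqrt_mul_frobeniusNorm {ι F : Type*} [Fintype ι]
    [SeminormedAddCommGroup F] [NormedSpace ℝ F] (e : ι → ℝ) (v : ι → F) :
    ‖∑ i, e i • v i‖ ≤ √(∑ i, e i ^ 2) * frobeniusNorm v :=
  calc ‖∑ i, e i • v i‖ ≤ ∑ i, |e i| * ‖v i‖ :=
        norm_sum_le_of_le _ fun i _ => (norm_smul (e i) (v i)).le
    _ ≤ √(∑ i, |e i| ^ 2) * √(∑ i, ‖v i‖ ^ 2) := Real.sum_mul_le_sqrt_mul_sqrt _ _ _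
    _ = √(∑ i, e i ^ 2) * frobeniusNorm v := by simp only [sq_abs, frobeniusNorm]

theorem sqrt_card_mul_le_sqrt_sum_sq {ι : Type*} [Fintype ι] {e : ι → ℝ} {m : ℝ} (hm : 0 ≤ m)
    (he : ∀ i, m ≤ e i) : √(Fintype.card ι) * m ≤ √(∑ i, e i ^ 2) := by
  refine Real.le_sqrt_of_sq_le ?_
  calc (√(Fintype.card ι) * m) ^ 2 = ∑ _i : ι, m ^ 2 := by
        simp [mul_pow]
    _ ≤ ∑ i, e i ^ 2 := Finset.sum_le_sum fun i _ => pow_le_pow_left₀ hm (he i) 2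

theorem attention_error_le {ι F : Type*} [Fintype ι] [Nonempty ι] [SeminormedAddCommGroup F]
    [NormedSpace ℝ F] {T : ℕ} {ε m : ℝ} (hε : 0 ≤ ε) (hε₁ : ε ≤ 1) (hm : 0 < m) {e : ι → ℝ}
    (he : ∀ i, m ≤ e i) {v : ι → F} {S S' : Fin (T + 1) → Finset ι}
    (hden : |levelSum S e - ∑ i, e i| ≤ ε / 3 * (Fintype.card ι * m))
    (hnum : ‖levelSum S' (fun i => e i • v i) - ∑ i, e i • v i‖
      ≤ ε / 3 * (√(Fintype.card ι) * m * frobeniusNorm v)) :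
    ‖(levelSum S e)⁻¹ • levelSum S' (fun i => e i • v i) - ∑ i, (e i / ∑ j, e j) • v i‖
      ≤ ε * √(∑ i, (e i / ∑ j, e j) ^ 2) * frobeniusNorm v := by
  set Z := ∑ i, e i
  have hZ : Fintype.card ι * m ≤ Z := by
    simpa using Finset.card_nsmul_le_sum Finset.univ e m fun i _ => he i
  have hZ_pos : 0 < Z := lt_of_lt_of_le (by positivity) hZ
  have hsoftmax_sum : ∑ i, (e i / Z) • v i = Z⁻¹ • ∑ i, e i • v i := by
    simp only [Finset.smul_sum, smul_smul, div_eq_inv_mul]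
  have hsoftmax_norm : √(∑ i, (e i / Z) ^ 2) = √(∑ i, e i ^ 2) / Z := by
    simp only [div_pow]
    rw [← Finset.sum_div, Real.sqrt_div' _ (sq_nonneg Z), Real.sqrt_sq hZ_pos.le]
  have hF := frobeniusNorm_nonneg v
  have hW := sqrt_card_mul_le_sqrt_sum_sq hm.le he
  rw [hsoftmax_sum, hsoftmax_norm]
  calc _ ≤ ε * (√(∑ i, e i ^ 2) * frobeniusNorm v / Z) :=
        norm_ratio_sub_ratio_le hZ_pos hε hε₁ (norm_sum_smul_le_sqrt_mul_frobeniusNorm e v)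
          (hnum.trans (by gcongr)) (hden.trans (by gcongr))
    _ = ε * (√(∑ i, e i ^ 2) / Z) * frobeniusNorm v := by ring

variable {ι F : Type*} [Fintype ι] [Nonempty ι] [NormedAddCommGroup F] [InnerProductSpace ℝ F]
  {T d : ℕ}

theorem hasObliviousSampler_attention {H : Type*} [NormedAddCommGroup H] [InnerProductSpace ℝ H]
    {R m ε : ℝ} (hT : T = Nat.clog 2 (Fintype.card ι)) (hd : 0 < d) (hR : 0 < R) (hm : 0 < m)
    (hmR : m ≤ R ^ 2) (hε : 0 < ε) (hε₁ : ε ≤ 1) {v : ι → F}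
    (hvd : Set.finrank ℝ (Set.range v) ≤ d) {y : ι → H} (hy : ∀ i, ‖y i‖ ≤ R) :
    HasObliviousSampler
      (fun p : (Fin (T + 1) → Finset ι) × (Fin (T + 1) → Finset ι) =>
        ((∑ l, ((p.1 l).card + (p.2 l).card) : ℕ) : ℝ)
          ≤ 1730 * √d * (R ^ 2 / m) * ε⁻¹ * Real.log (2 + Fintype.card ι) ^ 4)
      (fun u p => ‖u‖ ≤ R → (∀ i, m ≤ ⟪y i, u⟫) →
        ‖(levelSum p.1 fun i => ⟪y i, u⟫)⁻¹ • levelSum p.2 (fun i => ⟪y i, u⟫ • v i)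
            - ∑ i, (⟪y i, u⟫ / ∑ j, ⟪y j, u⟫) • v i‖
          ≤ ε * √(∑ i, (⟪y i, u⟫ / ∑ j, ⟪y j, u⟫) ^ 2) * frobeniusNorm v)
      (ENNReal.ofReal (1 / (2 + Fintype.card ι) ^ 2)) := by
  have hones : Set.finrank ℝ (Set.range fun _ : ι => (1 : ℝ)) ≤ d :=
    (Submodule.finrank_le _).trans ((Module.finrank_self ℝ).trans_le hd)
  have hfrobenius_ones : √(Fintype.card ι) * m * frobeniusNorm (fun _ : ι => (1 : ℝ))
      = Fintype.card ι * m := by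
    rw [mul_right_comm]
    simp [frobeniusNorm]
  have hdenominator := hasObliviousSampler_weightedSum hT hd hR hm hmR hε hε₁ _ hones hy
  have hnumerator := hasObliviousSampler_weightedSum hT hd hR hm hmR hε hε₁ v hvd hy
  rw [hfrobenius_ones] at hdenominator
  simp only [smul_eq_mul, mul_one] at hdenominator
  rw [← add_halves (1 / (2 + (Fintype.card ι : ℝ)) ^ 2),
    ENNReal.ofReal_add (by positivity) (by positivity)]
  refine hdenominator.bind (fun _ _ => hnumerator) Prod.mk (fun S S' hS hS' => ?_)
    fun u S S' _ _ hden hnum hu hm_le => attention_error_le hε.le hε₁ hm hm_le (hden hu) (hnum hu)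
  push_cast
  rw [Finset.sum_add_distrib]
  linarith

theorem exp_neg_le_exp_inner_div {E : Type*} [SeminormedAddCommGroup E] [InnerProductSpace ℝ E]
    {r s : ℝ} (hs : 0 ≤ s) {a b : E} (ha : ‖a‖ ≤ r) (hb : ‖b‖ ≤ r) :
    Real.exp (-(r ^ 2 / s)) ≤ Real.exp (⟪a, b⟫ / s) := by
  rw [Real.exp_le_exp, ← neg_div]
  gcongr
  calc -r ^ 2 ≤ -(‖a‖ * ‖b‖) := by nlinarith [norm_nonneg a, norm_nonneg b]
    _ ≤ ⟪a, b⟫ := (abs_le.1 (abs_real_inner_le_norm a b)).1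

theorem stmt_13_general {E : Type u} [NormedAddCommGroup E] [InnerProductSpace ℝ E] {r s ε : ℝ}
    (hd : 0 < d) (hs : 0 < s) (hε : 0 < ε) (hε₁ : ε ≤ 1) {k : ι → E} (hk : ∀ i, ‖k i‖ ≤ r)
    {v : ι → F} (hvd : Set.finrank ℝ (Set.range v) ≤ d) (hT : T = Nat.clog 2 (Fintype.card ι)) :
    ∃ μ : PMF ((Fin (T + 1) → Finset ι) × (Fin (T + 1) → Finset ι)),
      (∀ p ∈ μ.support, ((∑ l, ((p.1 l).card + (p.2 l).card) : ℕ) : ℝ)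
        ≤ 1730 * √d * Real.exp (2 * r ^ 2 / s) * ε⁻¹ * Real.log (2 + Fintype.card ι) ^ 4) ∧
      ∀ q : E, ‖q‖ ≤ r →
        ENNReal.ofReal (1 - 1 / (Fintype.card ι : ℝ) ^ 2) ≤ μ.toOuterMeasure {p |
          ‖(levelSum p.1 fun i => Real.exp (⟪k i, q⟫ / s))⁻¹ •
                levelSum p.2 (fun i => Real.exp (⟪k i, q⟫ / s) • v i)
              - ∑ i, (Real.exp (⟪k i, q⟫ / s) / ∑ j, Real.exp (⟪k j, q⟫ / s)) • v i‖
            ≤ ε * √(∑ i, (Real.exp (⟪k i, q⟫ / s) / ∑ j, Real.exp (⟪k j, q⟫ / s)) ^ 2)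
              * frobeniusNorm v} := by
  obtain ⟨H, _, _, φ, hφ⟩ := exists_inner_eq_exp (E := E) hs.le
  set R := √(Real.exp (r ^ 2 / s))
  set m := Real.exp (-(r ^ 2 / s))
  have hR_sq : R ^ 2 = Real.exp (r ^ 2 / s) := Real.sq_sqrt (Real.exp_pos _).le
  have hR_div_m : R ^ 2 / m = Real.exp (2 * r ^ 2 / s) := by
    rw [hR_sq, ← Real.exp_sub]
    ring_nf
  have hmR : m ≤ R ^ 2 := hR_sq ▸ Real.exp_le_exp.2 (neg_le_self (by positivity))
  have hφ_norm {a : E} (ha : ‖a‖ ≤ r) : ‖φ a‖ ≤ R := by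
    refine Real.le_sqrt_of_sq_le ?_
    rw [← real_inner_self_eq_norm_sq, hφ, real_inner_self_eq_norm_sq]
    gcongr
  have hattention := hasObliviousSampler_attention hT hd (by positivity) (Real.exp_pos _) hmR hε
    hε₁ hvd fun i => hφ_norm (hk i)
  rw [hR_div_m] at hattention
  have hfailure : 1 / (2 + Fintype.card ι : ℝ) ^ 2 ≤ 1 / (Fintype.card ι : ℝ) ^ 2 := by
    gcongr
    linarith
  obtain ⟨μ, hμ, hgood⟩ :=
    (hattention.mono (ENNReal.ofReal_le_ofReal hfailure)).exists_pmf_one_sub_le (by positivity)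
  refine ⟨μ, hμ, fun q hq => (hgood (φ q)).trans (μ.toOuterMeasure_mono fun p hp => ?_)⟩
  have hm_le (i : ι) : m ≤ ⟪φ (k i), φ q⟫ := by
    rw [hφ]
    exact exp_neg_le_exp_inner_div hs.le (hk i) hq
  simpa only [hφ, Set.mem_ofPred_eq] using hp.1 (hφ_norm hq) hm_le

end Attention

/-- BalanceKV guarantee (Theorem 3.1) at the end of the stream: there is an absolute constant
`c > 0` such that for keys `k_i ∈ ℝ^d` with `‖k_i‖ ≤ r`, values `v_i ∈ ℝ^d`, `ε ∈ (0,1)` and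
`T = ⌈log₂ n⌉`, there is a query-oblivious (finitely supported) distribution over pairs of
tuples `((K^0,…,K^T), (V^0,…,V^T))` of subsets of `[n]` of total size at most
`c √d e^{2r²/√d} ε⁻¹ (log(2+n))⁴`, such that for every query `q` with `‖q‖ ≤ r`, with
probability at least `1 − 1/n²`, the estimator
`z = (∑_l 2^l ∑_{i∈V^l} e^{⟨k_i,q⟩/√d} v_i) / (∑_l 2^l ∑_{i∈K^l} e^{⟨k_i,q⟩/√d})`
satisfies `‖z − Attn(q,K,V)‖ ≤ ε ‖softmax(Kq/√d)‖₂ ‖V‖_F`. -/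
theorem stmt_13 :
    ∃ c : ℝ, 0 < c ∧
      ∀ (n d : ℕ), 0 < n → 0 < d →
        ∀ (r ε : ℝ), 0 < r → 0 < ε → ε < 1 →
          ∀ (k v : Fin n → EuclideanSpace ℝ (Fin d)), (∀ i, ‖k i‖ ≤ r) →
            ∀ T : ℕ, T = Nat.clog 2 n →
              ∃ μ : PMF ((Fin (T + 1) → Finset (Fin n)) × (Fin (T + 1) → Finset (Fin n))),
                (∀ p ∈ μ.support,
                    ((∑ l : Fin (T + 1), ((p.1 l).card + (p.2 l).card) : ℕ) : ℝ)
                      ≤ c * Real.sqrt d * Real.exp (2 * r ^ 2 / Real.sqrt d) * ε⁻¹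
                          * (Real.log (2 + n)) ^ 4) ∧
                ∀ q : EuclideanSpace ℝ (Fin d), ‖q‖ ≤ r →
                  ENNReal.ofReal (1 - 1 / (n : ℝ) ^ 2) ≤
                    μ.toOuterMeasure {p :
                        (Fin (T + 1) → Finset (Fin n)) × (Fin (T + 1) → Finset (Fin n)) |
                      ‖(∑ l : Fin (T + 1), (2 : ℝ) ^ (l : ℕ) *
                            ∑ i ∈ p.1 l, Real.exp (⟪k i, q⟫ / Real.sqrt d))⁻¹ •
                          (∑ l : Fin (T + 1), (2 : ℝ) ^ (l : ℕ) •
                            ∑ i ∈ p.2 l, Real.exp (⟪k i, q⟫ / Real.sqrt d) • v i)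
                        - ∑ i : Fin n,
                            (Real.exp (⟪k i, q⟫ / Real.sqrt d)
                              / ∑ j : Fin n, Real.exp (⟪k j, q⟫ / Real.sqrt d)) • v i‖
                      ≤ ε * Real.sqrt (∑ i : Fin n,
                            (Real.exp (⟪k i, q⟫ / Real.sqrt d)
                              / ∑ j : Fin n, Real.exp (⟪k j, q⟫ / Real.sqrt d)) ^ 2)
                          * Real.sqrt (∑ i : Fin n, ‖v i‖ ^ 2)} := by
  refine ⟨1730, by norm_num, fun n d hn hd r ε _ hε hε₁ k v hk T hT => ?_⟩
  have : NeZero n := ⟨hn.ne'⟩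
  have hvd : Set.finrank ℝ (Set.range v) ≤ d :=
    (Submodule.finrank_le _).trans_eq finrank_euclideanSpace_fin
  simpa only [levelSum, frobeniusNorm, smul_eq_mul, Fintype.card_fin] using stmt_13_general hd
    (Real.sqrt_pos.2 (Nat.cast_pos.2 hd)) hε hε₁.le hk hvd (by rwa [Fintype.card_fin])
end
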